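/- arXiv:1309.0441 — 9 statements merged into one kernel-verified Lean document; each statement's English description precedes it below -/
import Mathlib

section
/- Let φ(a,b,k) denote the condition: there exist x, y, z ∈ ℚ with 2 + a·b·k² + b·z² = x² + a·y². Then for every n ∈ ℚ, n is an integer (i.e., there exists m ∈ ℤ with n = m) if and only if for all nonzero a, b ∈ ℚ, the following holds: if φ(a,b,0) and for every k ∈ ℚ, φ(a,b,k) implies φ(a,b,k+1), then φ(a,b,n). -/
/-!
Suitable forms `φ(q, p, ·)` define "the denominator of `k` is prime to `pq`" (or to `2p`, when
`q = 1`). Such a condition holds at `0` and is invariant under `k ↦ k + 1`, and every prime is ruled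
out of the denominator of `n` by one of these forms.

If `k = r / s` has denominator prime to `pq`, put `M = 2s² + pqr²`; then `φ(q, p, k)` asks for a
rational solution of `M + pz² = x² + qy²`. By Dirichlet's theorem and quadratic reciprocity there is
a prime `c` for which Legendre's theorem solves both `Mw² + pz² = ct²` and `x² + qy² = cv²`, so that
both sides can be made equal to `c` times the same rational square. Conversely, clear
denominators by the least `D` possible: if a bad prime divided `D`, then, one of the relevant
coefficients being a nonresidue (or by congruences modulo 8 for the prime 2), it would divide all
the numerators, against minimality.
-/

open NumberTheorySymbols

/-! ### Legendre's theorem -/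

theorem exists_ne_zero_map_eq_zero_of_card_lt {ι G : Type*} [Fintype ι] [AddGroup G] [Finite G]
    (f : (ι → ℤ) →+ G) (N : ι → ℕ) (hN : Nat.card G < ∏ i, (N i + 1)) :
    ∃ v : ι → ℤ, v ≠ 0 ∧ f v = 0 ∧ ∀ i, |v i| ≤ N i := by
  classical
  have := Fintype.ofFinite G
  obtain ⟨s, t, hst, hf⟩ := Fintype.exists_ne_map_eq_of_card_lt
    (fun s : ∀ i, Fin (N i + 1) ↦ f fun i ↦ (s i : ℤ))
    (by simpa only [Nat.card_eq_fintype_card, Fintype.card_pi, Fintype.card_fin] using hN)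
  refine ⟨(fun i ↦ (s i : ℤ)) - fun i ↦ (t i : ℤ), ?_, ?_, fun i ↦ ?_⟩
  · rw [sub_ne_zero]
    exact fun h ↦ hst (funext fun i ↦ Fin.ext (by exact_mod_cast congrFun h i))
  · rw [map_sub, sub_eq_zero]
    exact hf
  · simp only [Pi.sub_apply, abs_le]
    omega

theorem sq_le_of_abs_le_sqrt {x : ℤ} {n : ℕ} (h : |x| ≤ n.sqrt) : x ^ 2 ≤ n :=
  calc x ^ 2 ≤ (n.sqrt : ℤ) ^ 2 := sq_le_sq' (abs_le.mp h).1 (abs_le.mp h).2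
    _ ≤ n := by exact_mod_cast n.sqrt_le'

-- The bounds on `x` and `z` are strict, so that `a * x ^ 2 + b * y ^ 2 - c * z ^ 2` lies strictly
-- between `-(a * b * c)` and `2 * (a * b * c)`.
theorem exists_ne_zero_map_eq_zero_of_card_eq {a b c : ℕ} (ha : 0 < a) (hb : 0 < b) (hc : 0 < c)
    {G : Type*} [AddGroup G] [Finite G] (hG : Nat.card G = a * b * c) (f : (Fin 3 → ℤ) →+ G) :
    ∃ x y z : ℤ, ![x, y, z] ≠ 0 ∧ f ![x, y, z] = 0 ∧
      x ^ 2 < b * c ∧ y ^ 2 ≤ a * c ∧ z ^ 2 < a * b := by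
  have hbc_pos : 0 < b * c := Nat.mul_pos hb hc
  have hab_pos : 0 < a * b := Nat.mul_pos ha hb
  have lt_sqrt_add_one (n : ℕ) : n < (n.sqrt + 1) ^ 2 := n.lt_succ_sqrt'
  have hbc : b * c ≤ ((b * c - 1).sqrt + 1) ^ 2 := Nat.le_of_pred_lt (lt_sqrt_add_one _)
  have hab : a * b ≤ ((a * b - 1).sqrt + 1) ^ 2 := Nat.le_of_pred_lt (lt_sqrt_add_one _)
  obtain ⟨v, hv, hfv, hle⟩ := exists_ne_zero_map_eq_zero_of_card_lt f
    ![(b * c - 1).sqrt, (a * c).sqrt, (a * b - 1).sqrt] <| by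
      rw [hG, Fin.prod_univ_three]
      apply lt_of_pow_lt_pow_left₀ 2 (Nat.zero_le _)
      calc (a * b * c) ^ 2 = (b * c) * (a * c) * (a * b) := by ring
        _ < ((b * c - 1).sqrt + 1) ^ 2 * ((a * c).sqrt + 1) ^ 2 * ((a * b - 1).sqrt + 1) ^ 2 := by
          exact Nat.mul_lt_mul_of_lt_of_le
            (Nat.mul_lt_mul_of_le_of_lt hbc (lt_sqrt_add_one _) (by positivity)) hab (by positivity)
        _ = _ := by simp only [Matrix.cons_val]; ring
  have hv3 : ![v 0, v 1, v 2] = v := by ext i; fin_cases i <;> rfl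
  have hx := sq_le_of_abs_le_sqrt (hle 0)
  have hy := sq_le_of_abs_le_sqrt (hle 1)
  have hz := sq_le_of_abs_le_sqrt (hle 2)
  refine ⟨v 0, v 1, v 2, by rwa [hv3], by rwa [hv3], ?_, by exact_mod_cast hy, ?_⟩
  · rw [Nat.cast_pred hbc_pos] at hx
    push_cast at hx
    linarith
  · rw [Nat.cast_pred hab_pos] at hz
    push_cast at hz
    linarith

theorem mul_sq_eq_mul_sq_of_mul_eq_mul {R : Type*} [CommRing R] {a d e x y : R} (ha : IsUnit a)
    (he : a * d = e * e) (h : a * x = e * y) : a * x ^ 2 = d * y ^ 2 := by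
  apply ha.mul_left_cancel
  linear_combination (a * x + e * y) * h - y ^ 2 * he

theorem exists_mul_dvd_mul_sq_add_mul_sq_sub_mul_sq {a b c : ℕ} (ha : 0 < a) (hb : 0 < b)
    (hc : 0 < c) (hab : a.Coprime b) (hac : a.Coprime c) (hbc : b.Coprime c)
    (hsc : IsSquare (-(a * b) : ZMod c)) (hsb : IsSquare (a * c : ZMod b))
    (hsa : IsSquare (b * c : ZMod a)) :
    ∃ x y z : ℤ, ![x, y, z] ≠ 0 ∧ (a * b * c : ℤ) ∣ a * x ^ 2 + b * y ^ 2 - c * z ^ 2 ∧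
      x ^ 2 < b * c ∧ y ^ 2 ≤ a * c ∧ z ^ 2 < a * b := by
  have : NeZero a := ⟨ha.ne'⟩
  have : NeZero b := ⟨hb.ne'⟩
  have : NeZero c := ⟨hc.ne'⟩
  obtain ⟨r, hr⟩ := hsc
  obtain ⟨s, hs⟩ := hsb
  obtain ⟨t, ht⟩ := hsa
  let f : (Fin 3 → ℤ) →+ ZMod a × ZMod b × ZMod c := AddMonoidHom.mk'
    (fun v ↦ (b * v 1 - t * v 2, a * v 0 - s * v 2, a * v 0 - r * v 1)) <| fun v w ↦ by
      simp only [Pi.add_apply, Int.cast_add, Prod.mk_add_mk, Prod.mk.injEq]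
      refine ⟨?_, ?_, ?_⟩ <;> ring
  obtain ⟨x, y, z, hne, hf, hbounds⟩ := exists_ne_zero_map_eq_zero_of_card_eq ha hb hc
    (by simp only [Nat.card_prod, Nat.card_zmod, mul_assoc]) f
  refine ⟨x, y, z, hne, ?_, hbounds⟩
  obtain ⟨hfa, hfb, hfc⟩ : b * y = t * z ∧ a * x = s * z ∧ a * x = r * y := by
    simpa [f, sub_eq_zero] using hf
  have hdc : (c : ℤ) ∣ a * x ^ 2 + b * y ^ 2 - c * z ^ 2 := by
    have := mul_sq_eq_mul_sq_of_mul_eq_mul ((ZMod.isUnit_iff_coprime a c).mpr hac)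
      (d := -(b : ZMod c)) (by rw [mul_neg, hr]) hfc
    rw [← ZMod.intCast_zmod_eq_zero_iff_dvd]
    push_cast
    linear_combination this - (z : ZMod c) ^ 2 * ZMod.natCast_self c
  have hdb : (b : ℤ) ∣ a * x ^ 2 + b * y ^ 2 - c * z ^ 2 := by
    have := mul_sq_eq_mul_sq_of_mul_eq_mul ((ZMod.isUnit_iff_coprime a b).mpr hab) hs hfb
    rw [← ZMod.intCast_zmod_eq_zero_iff_dvd]
    push_cast
    linear_combination this + (y : ZMod b) ^ 2 * ZMod.natCast_self b
  have hda : (a : ℤ) ∣ a * x ^ 2 + b * y ^ 2 - c * z ^ 2 := by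
    have := mul_sq_eq_mul_sq_of_mul_eq_mul ((ZMod.isUnit_iff_coprime b a).mpr hab.symm) ht hfa
    rw [← ZMod.intCast_zmod_eq_zero_iff_dvd]
    push_cast
    linear_combination this + (x : ZMod a) ^ 2 * ZMod.natCast_self a
  exact (hac.isCoprime.mul_left hbc.isCoprime).mul_dvd (hab.isCoprime.mul_dvd hda hdb) hdc

theorem exists_mul_sq_add_mul_sq_eq_mul_sq {a b c : ℕ} (ha : 0 < a) (hb : 0 < b) (hc : 0 < c)
    (hab : a.Coprime b) (hac : a.Coprime c) (hbc : b.Coprime c)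
    (hsc : IsSquare (-(a * b) : ZMod c)) (hsb : IsSquare (a * c : ZMod b))
    (hsa : IsSquare (b * c : ZMod a)) :
    ∃ x y z : ℤ, z ≠ 0 ∧ a * x ^ 2 + b * y ^ 2 = c * z ^ 2 := by
  obtain ⟨x, y, z, hne, ⟨k, hk⟩, hx, hy, hz⟩ :=
    exists_mul_dvd_mul_sq_add_mul_sq_sub_mul_sq ha hb hc hab hac hbc hsc hsb hsa
  zify at ha hb hc
  have habc : (0 : ℤ) < a * b * c := by positivity
  have hk_lt : k < 2 := by
    have : (a * b * c : ℤ) * k < a * b * c * 2 := by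
      calc _ = (a : ℤ) * x ^ 2 + b * y ^ 2 - c * z ^ 2 := hk.symm
        _ ≤ (a : ℤ) * x ^ 2 + b * y ^ 2 := by linarith [mul_nonneg hc.le (sq_nonneg z)]
        _ < a * (b * c) + b * (a * c) :=
          add_lt_add_of_lt_of_le (by gcongr) (by gcongr)
        _ = _ := by ring
    exact lt_of_mul_lt_mul_left this habc.le
  have hlt_k : -1 < k := by
    have : (a * b * c : ℤ) * -1 < a * b * c * k := by
      calc _ = -(c * (a * b) : ℤ) := by ring
        _ < -(c * z ^ 2) := by gcongr
        _ ≤ a * x ^ 2 + b * y ^ 2 - c * z ^ 2 := by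
          linarith [mul_nonneg ha.le (sq_nonneg x), mul_nonneg hb.le (sq_nonneg y)]
        _ = _ := hk
    exact lt_of_mul_lt_mul_left this habc.le
  obtain rfl | rfl : k = 0 ∨ k = 1 := by omega
  · have hxyz : a * x ^ 2 + b * y ^ 2 = c * z ^ 2 := by linear_combination hk
    refine ⟨x, y, z, ?_, hxyz⟩
    rintro rfl
    rw [zero_pow two_ne_zero, mul_zero, add_eq_zero_iff_of_nonneg (by positivity) (by positivity)]
      at hxyz
    exact hne (by simpa [(Nat.cast_pos.mp ha).ne', (Nat.cast_pos.mp hb).ne'] using hxyz)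
  · -- Here `a * x ^ 2 + b * y ^ 2 = c * (z ^ 2 + a * b)`: multiply by the norm `z ^ 2 + a * b`.
    exact ⟨x * z + b * y, y * z - a * x, z ^ 2 + a * b, by positivity,
      by linear_combination (z ^ 2 + a * b : ℤ) * hk⟩

theorem eq_zero_of_mul_sq_eq_prime_mul_sq {c p : ℕ} (hc : c.Prime) (hcp : c.Coprime p) {y z : ℤ}
    (h : p * y ^ 2 = c * z ^ 2) : z = 0 := by
  by_contra hz
  have hy : y ≠ 0 := by
    rintro rfl
    simp [hz, hc.ne_zero] at h
  have hsq : IsSquare (p * c) := by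
    rw [← Rat.isSquare_natCast_iff]
    refine ⟨c * z / y, ?_⟩
    have : (p * y ^ 2 : ℚ) = c * z ^ 2 := by exact_mod_cast h
    field_simp
    push_cast
    linear_combination c * this
  obtain ⟨t, ht⟩ := hsq
  obtain ⟨u, rfl⟩ : c ∣ t := hc.dvd_of_dvd_pow (n := 2) ⟨p, by linarith⟩
  have hdvd : c ∣ p := ⟨u * u, Nat.eq_of_mul_eq_mul_right hc.pos (by rw [ht]; ring)⟩
  exact (hc.coprime_iff_not_dvd.mp hcp) hdvd

/-! ### Primes with prescribed Jacobi symbols -/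

theorem exists_prime_forall_modEq {L : List (ℕ × ℕ)}
    (hpair : L.Pairwise (Function.onFun Nat.Coprime Prod.snd)) (hne : ∀ x ∈ L, x.2 ≠ 0)
    (hcop : ∀ x ∈ L, x.1.Coprime x.2) :
    ∃ c : ℕ, c.Prime ∧ ∀ x ∈ L, c ≡ x.1 [MOD x.2] := by
  obtain ⟨k, hk⟩ := Nat.chineseRemainderOfList Prod.fst Prod.snd L hpair
  have hk_cop : k.Coprime (L.map Prod.snd).prod := by
    simp only [Nat.coprime_list_prod_right_iff, List.forall_mem_map]
    exact fun x hx ↦ (hk x hx).gcd_eq.trans (hcop x hx)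
  have hprod : (L.map Prod.snd).prod ≠ 0 :=
    List.prod_ne_zero (by simpa using fun x hx ↦ hne (x, 0) hx rfl)
  obtain ⟨c, -, hc, hck⟩ := Nat.forall_exists_prime_gt_and_modEq 0 hprod hk_cop
  exact ⟨c, hc, fun x hx ↦ (hck.of_dvd (List.dvd_prod (List.mem_map_of_mem hx))).trans (hk x hx)⟩

theorem exists_prime_jacobiSym_two_eq {L : List (ℕ × ℕ)}
    (hpair : L.Pairwise (Function.onFun Nat.Coprime Prod.snd)) (hodd : ∀ x ∈ L, Odd x.2)
    (hcop : ∀ x ∈ L, x.1.Coprime x.2) {ε : ℤ} (hε : ε = 1 ∨ ε = -1) :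
    ∃ c : ℕ, c.Prime ∧ c % 4 = 1 ∧ J(2 | c) = ε ∧ ∀ x ∈ L, c ≡ x.1 [MOD x.2] := by
  obtain ⟨r, hr, hr4, hχ⟩ : ∃ r : ℕ, r.Coprime 8 ∧ r % 4 = 1 ∧ ZMod.χ₈ r = ε := by
    rcases hε with rfl | rfl
    · exact ⟨1, by decide⟩
    · exact ⟨5, by decide⟩
  have coprime_eight {x : ℕ × ℕ} (hx : x ∈ L) : Nat.Coprime 8 x.2 :=
    (Nat.coprime_two_left.mpr (hodd x hx)).pow_left 3
  obtain ⟨c, hc, hmod⟩ := exists_prime_forall_modEq (L := (r, 8) :: L)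
    (List.pairwise_cons.mpr ⟨fun x hx ↦ coprime_eight hx, hpair⟩)
    (List.forall_mem_cons.mpr ⟨by norm_num, fun x hx ↦ (hodd x hx).pos.ne'⟩)
    (List.forall_mem_cons.mpr ⟨hr, hcop⟩)
  obtain ⟨hcr, hcL⟩ := List.forall_mem_cons.mp hmod
  have hc4 : c % 4 = 1 := Eq.trans (hcr.of_dvd (by norm_num : 4 ∣ 8)) hr4
  refine ⟨c, hc, hc4, ?_, hcL⟩
  rw [jacobiSym.at_two (Nat.odd_iff.mpr (by omega)), ← hχ,
    (ZMod.natCast_eq_natCast_iff c r 8).mpr hcr]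

theorem jacobiSym_natCast_eq_of_modEq {c d n : ℕ} (h : c ≡ d [MOD n]) : J(c | n) = J(d | n) :=
  jacobiSym.mod_left' (by exact_mod_cast h)

theorem jacobiSym_eq_of_one_mod_four_of_modEq {c d n : ℕ} (hc : c % 4 = 1) (hn : Odd n)
    (h : c ≡ d [MOD n]) : J(n | c) = J(d | n) := by
  rw [jacobiSym.quadratic_reciprocity_one_mod_four' hn hc, jacobiSym_natCast_eq_of_modEq h]

theorem jacobiSym_neg_of_one_mod_four (a : ℤ) {c : ℕ} (hc : c % 4 = 1) : J(-a | c) = J(a | c) := by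
  rw [jacobiSym.neg a (Nat.odd_iff.mpr (by omega)), ZMod.χ₄_nat_one_mod_four hc, one_mul]

theorem exists_prime_one_mod_four_jacobiSym_eq_neg_one {q : ℕ} (hq : q.Prime) (hodd : Odd q) :
    ∃ p : ℕ, p.Prime ∧ p % 4 = 1 ∧ J(p | q) = -1 := by
  have : Fact q.Prime := ⟨hq⟩
  obtain ⟨t, ht⟩ := FiniteField.exists_nonsquare (F := ZMod q) (by
    rw [ZMod.ringChar_zmod_n]
    exact hodd.ne_two_of_dvd_nat dvd_rfl)
  have ht_cop : t.val.Coprime q := (ZMod.isUnit_iff_coprime _ _).mp (by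
    rw [ZMod.natCast_zmod_val, isUnit_iff_ne_zero]
    rintro rfl
    exact ht IsSquare.zero)
  obtain ⟨p, hp, hp4, -, hpt⟩ := exists_prime_jacobiSym_two_eq (L := [(t.val, q)])
    (List.pairwise_singleton _ _) (by simpa using hodd) (by simpa using ht_cop) (Or.inl rfl)
  refine ⟨p, hp, hp4, ?_⟩
  have hp_modEq : p ≡ t.val [MOD q] := hpt _ (List.mem_singleton_self _)
  rw [jacobiSym_natCast_eq_of_modEq hp_modEq]
  exact ZMod.nonsquare_iff_jacobiSym_eq_neg_one.mpr (by simpa using ht)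

theorem exists_prime_jacobiSym_two_eq_of_three {q p m u v w : ℕ} (hq : Odd q) (hp : Odd p)
    (hm : Odd m) (hqp : q.Coprime p) (hqm : q.Coprime m) (hpm : p.Coprime m) (hu : u.Coprime q)
    (hv : v.Coprime p) (hw : w.Coprime m) {ε : ℤ} (hε : ε = 1 ∨ ε = -1) :
    ∃ c : ℕ, c.Prime ∧ c % 4 = 1 ∧ J(2 | c) = ε ∧
      c ≡ u [MOD q] ∧ c ≡ v [MOD p] ∧ c ≡ w [MOD m] := by
  have forall_mem_triple (P : ℕ × ℕ → Prop) :
      (∀ x ∈ [(u, q), (v, p), (w, m)], P x) ↔ P (u, q) ∧ P (v, p) ∧ P (w, m) := by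
    simp only [List.forall_mem_cons, List.not_mem_nil, IsEmpty.forall_iff, implies_true, and_true]
  obtain ⟨c, hc, hc4, hc2, hmod⟩ := exists_prime_jacobiSym_two_eq (L := [(u, q), (v, p), (w, m)])
    (.cons (by simpa only [List.forall_mem_cons, List.not_mem_nil, IsEmpty.forall_iff,
      implies_true, and_true] using ⟨hqp, hqm⟩) (List.pairwise_pair.mpr hpm))
    ((forall_mem_triple _).mpr ⟨hq, hp, hm⟩) ((forall_mem_triple _).mpr ⟨hu, hv, hw⟩) hε
  exact ⟨c, hc, hc4, hc2, (forall_mem_triple _).mp hmod⟩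

theorem exists_prime_jacobiSym_mul_eq_one {M p q : ℕ} (hp : Odd p) (hq : Odd q) (hM4 : ¬ 4 ∣ M)
    (hMp : M.Coprime p) (hMq : M.Coprime q) (hpq : p.Coprime q)
    (h : p % 4 = 1 ∨ M % 4 = 1 ∨ Even M) :
    ∃ c : ℕ, c.Prime ∧ c % 4 = 1 ∧ c ≡ 1 [MOD q] ∧ c ≡ M [MOD p] ∧ c ≡ p [MOD M] ∧
      J(M * p | c) = 1 := by
  obtain ⟨m, hm, hMm⟩ : ∃ m, Odd m ∧ (M = m ∨ M = 2 * m) := by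
    rcases Nat.even_or_odd' M with ⟨m, hm | hm⟩
    · exact ⟨m, by grind, Or.inr hm⟩
    · exact ⟨M, ⟨m, hm⟩, Or.inl rfl⟩
  have hmM : m ∣ M := by rcases hMm with rfl | rfl <;> simp
  have hmp : m.Coprime p := hMp.coprime_dvd_left hmM
  have hmq : m.Coprime q := hMq.coprime_dvd_left hmM
  -- For even `M`, the value of `J(2 | c)` is free and can be chosen to correct the sign.
  set ε := J(p | m) * J(M | p)
  have hε_sq : ε ^ 2 = 1 := by
    rw [mul_pow, jacobiSym.sq_one (by exact_mod_cast hmp.symm),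
      jacobiSym.sq_one (by exact_mod_cast hMp), one_mul]
  obtain ⟨c, hc, hc4, hc2, hcq, hcp, hcm⟩ := exists_prime_jacobiSym_two_eq_of_three hq hp hm
    hpq.symm hmq.symm hmp.symm q.coprime_one_left hMp hmp.symm (sq_eq_one_iff.mp hε_sq)
  have hJm : J(m | c) = J(p | m) := jacobiSym_eq_of_one_mod_four_of_modEq hc4 hm hcm
  have hJp : J(p | c) = J(M | p) := jacobiSym_eq_of_one_mod_four_of_modEq hc4 hp hcp
  refine ⟨c, hc, hc4, hcq, hcp, ?_, ?_⟩
  · rcases hMm with rfl | rfl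
    · exact hcm
    · refine (Nat.modEq_and_modEq_iff_modEq_mul (Nat.coprime_two_left.mpr hm)).mp ⟨?_, hcm⟩
      exact (Nat.odd_iff.mp (by grind)).trans (Nat.odd_iff.mp hp).symm
  · rw [jacobiSym.mul_left, hJp]
    rcases hMm with rfl | rfl
    · have hrec : J(p | M) = J(M | p) := by
        rcases h with h | h | h
        · exact jacobiSym.quadratic_reciprocity_one_mod_four h hm
        · exact jacobiSym.quadratic_reciprocity_one_mod_four' hp h
        · exact absurd h (Nat.not_even_iff_odd.mpr hm)
      rw [hJm, hrec, ← sq]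
      exact jacobiSym.sq_one (by exact_mod_cast hMp)
    · have hJM : J((2 * m : ℕ) | c) = ε * J(p | m) := by
        rw [Nat.cast_mul, jacobiSym.mul_left, Nat.cast_ofNat, hc2, hJm]
      rw [hJM]
      linear_combination hε_sq

/-! ### Rational solutions of `M + p * z ^ 2 = x ^ 2 + q * y ^ 2` -/

theorem isSquare_natCast_mul_of_modEq {c m n : ℕ} (h : c ≡ m [MOD n]) :
    IsSquare (m * c : ZMod n) :=
  ⟨m, by rw [(ZMod.natCast_eq_natCast_iff c m n).mpr h]⟩

theorem isSquare_neg_natCast_of_jacobiSym_eq_one {c n : ℕ} (hc : c.Prime) (hc4 : c % 4 = 1)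
    (h : J(n | c) = 1) : IsSquare (-(n : ZMod c)) := by
  have : Fact c.Prime := ⟨hc⟩
  simpa only [Int.cast_neg, Int.cast_natCast] using
    ZMod.isSquare_of_jacobiSym_eq_one ((jacobiSym_neg_of_one_mod_four n hc4).trans h)

theorem exists_sq_add_mul_sq_eq_prime_mul_sq {q c : ℕ} (hq : Odd q) (hc : c.Prime)
    (hc4 : c % 4 = 1) (hcq : c ≡ 1 [MOD q]) :
    ∃ x y z : ℤ, z ≠ 0 ∧ x ^ 2 + q * y ^ 2 = c * z ^ 2 := by
  have hcop : c.Coprime q := hcq.gcd_eq.trans q.coprime_one_left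
  have hJ : J(q | c) = 1 := by
    rw [jacobiSym_eq_of_one_mod_four_of_modEq hc4 hq hcq, Nat.cast_one, jacobiSym.one_left]
  simpa only [Nat.cast_one, one_mul] using exists_mul_sq_add_mul_sq_eq_mul_sq one_pos hq.pos
    hc.pos q.coprime_one_left c.coprime_one_left hcop.symm
    (by simpa only [Nat.cast_one, one_mul] using
      isSquare_neg_natCast_of_jacobiSym_eq_one hc hc4 hJ)
    (isSquare_natCast_mul_of_modEq hcq)
    ⟨0, Subsingleton.elim _ _⟩

theorem exists_mul_sq_add_mul_sq_eq_prime_mul_sq {M p c : ℕ} (hM : 0 < M) (hp : 0 < p)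
    (hMp : M.Coprime p) (hc : c.Prime) (hc4 : c % 4 = 1) (hcp : c ≡ M [MOD p])
    (hcM : c ≡ p [MOD M]) (hJ : J(M * p | c) = 1) :
    ∃ x y z : ℤ, x ≠ 0 ∧ M * x ^ 2 + p * y ^ 2 = c * z ^ 2 := by
  have hc_p : c.Coprime p := hcp.gcd_eq.trans hMp
  have hc_M : c.Coprime M := hcM.gcd_eq.trans hMp.symm
  obtain ⟨x, y, z, hz, h⟩ := exists_mul_sq_add_mul_sq_eq_mul_sq hM hp hc.pos hMp hc_M.symm
    hc_p.symm
    (by simpa only [Nat.cast_mul] using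
      isSquare_neg_natCast_of_jacobiSym_eq_one hc hc4 (n := M * p) (by rwa [Nat.cast_mul]))
    (isSquare_natCast_mul_of_modEq hcp) (isSquare_natCast_mul_of_modEq hcM)
  refine ⟨x, y, z, ?_, h⟩
  rintro rfl
  exact hz (eq_zero_of_mul_sq_eq_prime_mul_sq hc hc_p (y := y) (by linear_combination h))

theorem exists_natCast_add_mul_sq_eq_sq_add_mul_sq {M p q : ℕ} (hp : Odd p) (hq : Odd q)
    (hM4 : ¬ 4 ∣ M) (hMp : M.Coprime p) (hMq : M.Coprime q) (hpq : p.Coprime q)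
    (h : p % 4 = 1 ∨ M % 4 = 1 ∨ Even M) :
    ∃ x y z : ℚ, M + p * z ^ 2 = x ^ 2 + q * y ^ 2 := by
  obtain ⟨c, hc, hc4, hcq, hcp, hcM, hJ⟩ :=
    exists_prime_jacobiSym_mul_eq_one hp hq hM4 hMp hMq hpq h
  have hM : 0 < M := Nat.pos_of_ne_zero (by rintro rfl; exact hM4 (dvd_zero 4))
  obtain ⟨x, y, v, hv, hxy⟩ := exists_sq_add_mul_sq_eq_prime_mul_sq hq hc hc4 hcq
  obtain ⟨w, z, t, hw, hwz⟩ :=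
    exists_mul_sq_add_mul_sq_eq_prime_mul_sq hM hp.pos hMp hc hc4 hcp hcM hJ
  have hxyℚ : (x ^ 2 + q * y ^ 2 : ℚ) = c * v ^ 2 := by exact_mod_cast hxy
  have hwzℚ : (M * w ^ 2 + p * z ^ 2 : ℚ) = c * t ^ 2 := by exact_mod_cast hwz
  refine ⟨x * t / (v * w), y * t / (v * w), z / w, ?_⟩
  field_simp
  linear_combination (v : ℚ) ^ 2 * hwzℚ - (t : ℚ) ^ 2 * hxyℚ

/-! ### Robinson's formula -/

/-- Robinson's formula `φ(a, b, k)`. Her definition of `ℤ` in `ℚ` is induction on `k` for the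
properties `φ(a, b, ·)`; since this induction reaches all integers in any commutative ring, the
variables range over one. -/
def RobinsonRel {R : Type*} [CommRing R] (a b k : R) : Prop :=
  ∃ x y z : R, 2 + a * b * k ^ 2 + b * z ^ 2 = x ^ 2 + a * y ^ 2

theorem robinsonRel_neg {R : Type*} [CommRing R] {a b k : R} :
    RobinsonRel a b (-k) ↔ RobinsonRel a b k := by
  simp only [RobinsonRel, neg_sq]

theorem robinsonRel_intCast {R : Type*} [CommRing R] {a b : R} (zero : RobinsonRel a b 0)
    (succ : ∀ k, RobinsonRel a b k → RobinsonRel a b (k + 1)) (m : ℤ) : RobinsonRel a b m := by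
  have natCast (n : ℕ) : RobinsonRel a b n := by
    induction n with
    | zero => rwa [Nat.cast_zero]
    | succ n ih =>
      rw [Nat.cast_succ]
      exact succ n ih
  obtain ⟨n, rfl | rfl⟩ := m.eq_nat_or_neg
  · rw [Int.cast_natCast]
    exact natCast n
  · rw [Int.cast_neg, Int.cast_natCast, robinsonRel_neg]
    exact natCast n

theorem sq_modEq_one_of_odd {n : ℕ} (hn : Odd n) : n ^ 2 ≡ 1 [MOD 4] := by
  have := Int.sq_mod_four_eq_one_of_odd (hn.natCast (R := ℤ))
  exact_mod_cast this

theorem odd_two_mul_sq_add_mul_sq_or_mod_four_eq_two {n r s : ℕ} (hn : Odd n)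
    (hrs : r.Coprime s) :
    Odd (2 * s ^ 2 + n * r ^ 2) ∨ (2 * s ^ 2 + n * r ^ 2) % 4 = 2 := by
  rcases Nat.even_or_odd r with hr | hr
  · have hs : Odd s := Nat.coprime_two_left.mp (hrs.coprime_dvd_left hr.two_dvd)
    have hs2 : s ^ 2 % 4 = 1 := sq_modEq_one_of_odd hs
    have hr2 : 4 ∣ n * r ^ 2 := (pow_dvd_pow_of_dvd hr.two_dvd 2).mul_left n
    omega
  · left
    exact (even_two_mul _).add_odd (hn.mul hr.pow)

theorem two_mul_sq_add_mul_sq_mod_four_eq_one {n r s : ℕ} (hn : n % 4 = 3) (hs : Odd s)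
    (hr : Odd r) : (2 * s ^ 2 + n * r ^ 2) % 4 = 1 := by
  have hs2 : s ^ 2 ≡ 1 [MOD 4] := sq_modEq_one_of_odd hs
  have hr2 : r ^ 2 ≡ 1 [MOD 4] := sq_modEq_one_of_odd hr
  exact ((hs2.mul_left 2).add (Nat.ModEq.mul (show n ≡ 3 [MOD 4] from hn) hr2)).trans rfl

theorem robinsonRel_of_coprime_den {p q : ℕ} (hp : Odd p) (hq : Odd q) (hpq : p.Coprime q) {k : ℚ}
    (hk : k.den.Coprime (p * q)) (h : p % 4 = 1 ∨ p * q % 4 = 3 ∧ Odd k.den) :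
    RobinsonRel (q : ℚ) p k := by
  set r := k.num.natAbs
  set s := k.den
  set M := 2 * s ^ 2 + p * q * r ^ 2 with hM
  have hM_mod_four := odd_two_mul_sq_add_mul_sq_or_mod_four_eq_two (hp.mul hq) k.reduced
  have hMpq : M.Coprime (p * q) := by
    rw [hM, Nat.coprime_add_mul_left_left]
    exact (Nat.coprime_two_left.mpr (hp.mul hq)).mul_left (hk.pow_left 2)
  have hM_cond : p % 4 = 1 ∨ M % 4 = 1 ∨ Even M := by
    rcases h with h | ⟨hpq3, hs⟩
    · exact Or.inl h
    · rcases Nat.even_or_odd r with hr | hr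
      · exact Or.inr (Or.inr ((even_two_mul _).add ((hr.pow_of_ne_zero two_ne_zero).mul_left _)))
      · exact Or.inr (Or.inl (two_mul_sq_add_mul_sq_mod_four_eq_one hpq3 hs hr))
  obtain ⟨x, y, z, hxyz⟩ := exists_natCast_add_mul_sq_eq_sq_add_mul_sq hp hq (by grind)
    hMpq.coprime_mul_right_right hMpq.coprime_mul_left_right hpq hM_cond
  have hMℚ : (M : ℚ) = s ^ 2 * (2 + p * q * k ^ 2) := by
    have hr : (r : ℚ) ^ 2 = k.num ^ 2 := by exact_mod_cast Int.natAbs_sq k.num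
    rw [hM]
    push_cast
    rw [hr, ← Rat.mul_den_eq_num]
    ring
  have hs : (s : ℚ) ≠ 0 := by exact_mod_cast k.den_ne_zero
  refine ⟨x / s, y / s, z / s, ?_⟩
  field_simp
  linear_combination hxyz - hMℚ

/-! ### Primes in the denominator -/

theorem den_dvd_of_intCast_eq_mul {n : ℤ} {D : ℕ} {x : ℚ} (h : (n : ℚ) = D * x) : x.den ∣ D := by
  rcases eq_or_ne D 0 with rfl | hD
  · exact dvd_zero _
  · have hx : x = Rat.divInt n D := by
      rw [Rat.divInt_eq_div, h, Int.cast_natCast, mul_div_cancel_left₀ _ (by exact_mod_cast hD)]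
    rw [hx]
    exact_mod_cast Rat.den_dvd n D

theorem exists_common_den {ι : Type*} [Finite ι] (v : ι → ℚ) :
    ∃ D : ℕ, 0 < D ∧ ∃ w : ι → ℤ, ∀ i, (w i : ℚ) = D * v i := by
  have := Fintype.ofFinite ι
  refine ⟨∏ i, (v i).den, Finset.prod_pos fun i _ ↦ (v i).den_pos, ?_⟩
  choose e he using fun i ↦ Finset.dvd_prod_of_mem (fun i ↦ (v i).den) (Finset.mem_univ i)
  refine ⟨fun i ↦ e i * (v i).num, fun i ↦ ?_⟩
  rw [he i, Int.cast_mul, ← Rat.mul_den_eq_num]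
  push_cast
  ring

theorem exists_primitive_common_den {ι : Type*} [Finite ι] (v : ι → ℚ) :
    ∃ (D : ℕ) (w : ι → ℤ), (∀ i, (w i : ℚ) = D * v i) ∧
      ∀ l : ℕ, 1 < l → l ∣ D → ∃ i, ¬ (l : ℤ) ∣ w i := by
  classical
  obtain ⟨hD, w, hw⟩ := Nat.find_spec (exists_common_den v)
  refine ⟨_, w, hw, fun l hl hlD ↦ ?_⟩
  by_contra! hdvd
  obtain ⟨d, hd⟩ := hlD
  choose u hu using hdvd
  rw [hd] at hD hw
  have hd_pos : 0 < d := Nat.pos_of_mul_pos_left hD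
  refine Nat.find_min (exists_common_den v) (m := d) ?_ ⟨hd_pos, u, fun i ↦ ?_⟩
  · rw [hd]
    exact lt_mul_of_one_lt_left hd_pos hl
  · have hl0 : (l : ℚ) ≠ 0 := by exact_mod_cast (zero_lt_one.trans hl).ne'
    apply mul_left_cancel₀ hl0
    rw [← mul_assoc, ← Nat.cast_mul, ← hw i, hu i]
    push_cast
    rfl

theorem not_dvd_den_of_robinsonRel {a b : ℤ} {l : ℕ} (hl : 1 < l)
    (descent : ∀ D X Y Z K : ℤ, (l : ℤ) ∣ D →
      2 * D ^ 2 + a * b * K ^ 2 + b * Z ^ 2 = X ^ 2 + a * Y ^ 2 →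
        (l : ℤ) ∣ X ∧ (l : ℤ) ∣ Y ∧ (l : ℤ) ∣ Z ∧ (l : ℤ) ∣ K)
    {k : ℚ} (h : RobinsonRel (a : ℚ) b k) : ¬ l ∣ k.den := by
  intro hlk
  obtain ⟨x, y, z, hxyz⟩ := h
  obtain ⟨D, w, hw, hprim⟩ := exists_primitive_common_den ![x, y, z, k]
  have hX : (w 0 : ℚ) = D * x := hw 0
  have hY : (w 1 : ℚ) = D * y := hw 1
  have hZ : (w 2 : ℚ) = D * z := hw 2
  have hK : (w 3 : ℚ) = D * k := hw 3
  have hlD : l ∣ D := hlk.trans (den_dvd_of_intCast_eq_mul hK)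
  have heq : 2 * (D : ℤ) ^ 2 + a * b * w 3 ^ 2 + b * w 2 ^ 2 = w 0 ^ 2 + a * w 1 ^ 2 := by
    have : (2 * D ^ 2 + a * b * w 3 ^ 2 + b * w 2 ^ 2 : ℚ) = w 0 ^ 2 + a * w 1 ^ 2 := by
      rw [hX, hY, hZ, hK]
      linear_combination (D : ℚ) ^ 2 * hxyz
    exact_mod_cast this
  obtain ⟨h0, h1, h2, h3⟩ := descent _ _ _ _ _ (Int.natCast_dvd_natCast.mpr hlD) heq
  obtain ⟨i, hi⟩ := hprim l hl hlD
  fin_cases i <;> contradiction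

theorem dvd_of_sq_dvd_sq_sub_mul_sq_sub_mul {l : ℕ} (hl : l.Prime) {η : ℤ} (hη : J(η | l) = -1)
    {x y t : ℤ} (h : (l : ℤ) ^ 2 ∣ x ^ 2 - η * y ^ 2 - l * t) :
    (l : ℤ) ∣ x ∧ (l : ℤ) ∣ y ∧ (l : ℤ) ∣ t := by
  have : Fact l.Prime := ⟨hl⟩
  have hnorm : (l : ℤ) ∣ x ^ 2 - η * y ^ 2 :=
    (dvd_sub_left (dvd_mul_right _ _)).mp ((dvd_pow_self _ two_ne_zero).trans h)
  obtain ⟨hx, hy⟩ := jacobiSym.prime_dvd_of_eq_neg_one hη hnorm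
  have hlt : (l : ℤ) * l ∣ l * t := by
    rw [← sq]
    exact (dvd_sub_right ((pow_dvd_pow_of_dvd hx 2).sub
      ((pow_dvd_pow_of_dvd hy 2).mul_left η))).mp h
  exact ⟨hx, hy, (mul_dvd_mul_iff_left (by exact_mod_cast hl.ne_zero)).mp hlt⟩

theorem not_dvd_den_of_jacobiSym_eq_neg_one {p q : ℕ} (hq : q.Prime) (hJ : J(p | q) = -1) {k : ℚ}
    (h : RobinsonRel (q : ℚ) p k) : ¬ q ∣ k.den := by
  refine not_dvd_den_of_robinsonRel (a := q) (b := p) hq.one_lt (fun D X Y Z K hD heq ↦ ?_)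
    (by exact_mod_cast h)
  obtain ⟨hX, hZ, hT⟩ := dvd_of_sq_dvd_sq_sub_mul_sq_sub_mul hq hJ (x := X) (y := Z)
    (t := p * K ^ 2 - Y ^ 2) <| by
      have : X ^ 2 - p * Z ^ 2 - q * (p * K ^ 2 - Y ^ 2) = 2 * D ^ 2 := by linear_combination -heq
      rw [this]
      exact (pow_dvd_pow_of_dvd hD 2).mul_left 2
  have : Fact q.Prime := ⟨hq⟩
  obtain ⟨hY, hK⟩ := jacobiSym.prime_dvd_of_eq_neg_one hJ ((dvd_sub_comm).mp hT)
  exact ⟨hX, hY, hZ, hK⟩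

theorem not_dvd_den_of_jacobiSym_neg_eq_neg_one {p q : ℕ} (hp : p.Prime) (hJ : J(-q | p) = -1)
    {k : ℚ} (h : RobinsonRel (q : ℚ) p k) : ¬ p ∣ k.den := by
  refine not_dvd_den_of_robinsonRel (a := q) (b := p) hp.one_lt (fun D X Y Z K hD heq ↦ ?_)
    (by exact_mod_cast h)
  obtain ⟨hX, hY, hT⟩ := dvd_of_sq_dvd_sq_sub_mul_sq_sub_mul hp hJ (x := X) (y := Y)
    (t := Z ^ 2 - -q * K ^ 2) <| by
      have : X ^ 2 - -q * Y ^ 2 - p * (Z ^ 2 - -q * K ^ 2) = 2 * D ^ 2 := by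
        linear_combination -heq
      rw [this]
      exact (pow_dvd_pow_of_dvd hD 2).mul_left 2
  have : Fact p.Prime := ⟨hp⟩
  obtain ⟨hZ, hK⟩ := jacobiSym.prime_dvd_of_eq_neg_one hJ hT
  exact ⟨hX, hY, hZ, hK⟩

theorem two_dvd_and_sq_emod_four_or_sq_emod_eight (x : ℤ) :
    2 ∣ x ∧ x ^ 2 % 4 = 0 ∨ x ^ 2 % 8 = 1 := by
  rcases Int.even_or_odd x with hx | hx
  · exact Or.inl ⟨hx.two_dvd, Int.emod_eq_zero_of_dvd (pow_dvd_pow_of_dvd hx.two_dvd 2)⟩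
  · exact Or.inr (Int.emod_eq_emod_iff_emod_sub_eq_zero.mpr
      (Int.emod_eq_zero_of_dvd (Int.eight_dvd_sq_sub_one_of_odd hx)))

theorem two_dvd_of_sq_add_sq_sub_mul_emod_eight {p x y z k : ℤ} (hp : p % 4 = 3)
    (h : (x ^ 2 + y ^ 2 - p * (z ^ 2 + k ^ 2)) % 8 = 0) : 2 ∣ x ∧ 2 ∣ y ∧ 2 ∣ z ∧ 2 ∣ k := by
  obtain ⟨m, rfl⟩ : ∃ m, p = 4 * m + 3 := ⟨p / 4, by omega⟩
  have h4 : (x ^ 2 + y ^ 2 + z ^ 2 + k ^ 2) % 4 = 0 := by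
    have : x ^ 2 + y ^ 2 - (4 * m + 3) * (z ^ 2 + k ^ 2) =
        x ^ 2 + y ^ 2 + z ^ 2 + k ^ 2 - 4 * ((m + 1) * (z ^ 2 + k ^ 2)) := by ring
    omega
  have same_parity : (2 ∣ x ∧ 2 ∣ y ∧ 2 ∣ z ∧ 2 ∣ k) ∨
      (x ^ 2 % 8 = 1 ∧ y ^ 2 % 8 = 1 ∧ z ^ 2 % 8 = 1 ∧ k ^ 2 % 8 = 1) := by
    have := two_dvd_and_sq_emod_four_or_sq_emod_eight x
    have := two_dvd_and_sq_emod_four_or_sq_emod_eight y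
    have := two_dvd_and_sq_emod_four_or_sq_emod_eight z
    have := two_dvd_and_sq_emod_four_or_sq_emod_eight k
    omega
  refine same_parity.resolve_right ?_
  rintro ⟨hx, hy, hz, hk⟩
  obtain ⟨u, hu⟩ : ∃ u, z ^ 2 + k ^ 2 = 8 * u + 2 := ⟨(z ^ 2 + k ^ 2) / 8, by omega⟩
  have : (4 * m + 3) * (z ^ 2 + k ^ 2) = 8 * (m * (4 * u + 1)) + 24 * u + 6 := by
    rw [hu]
    ring
  omega

theorem not_two_dvd_den_of_mod_four_eq_three {p : ℕ} (hp : p % 4 = 3) {k : ℚ}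
    (h : RobinsonRel (1 : ℚ) p k) : ¬ 2 ∣ k.den := by
  refine not_dvd_den_of_robinsonRel (a := 1) (b := p) one_lt_two (fun D X Y Z K hD heq ↦ ?_)
    (by exact_mod_cast h)
  obtain ⟨d, rfl⟩ := hD
  have hmod : (X ^ 2 + Y ^ 2 - p * (Z ^ 2 + K ^ 2)) % 8 = 0 := by
    have : X ^ 2 + Y ^ 2 - p * (Z ^ 2 + K ^ 2) = 8 * d ^ 2 := by
      push_cast at heq
      linear_combination -heq
    rw [this]
    exact Int.mul_emod_right 8 _
  exact two_dvd_of_sq_add_sq_sub_mul_emod_eight (by exact_mod_cast hp) hmod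

/-! ### The definition of `ℤ` -/

theorem robinsonRel_iff_coprime_den {p q : ℕ} (hp : p.Prime) (hp4 : p % 4 = 1) (hq : q.Prime)
    (hq_odd : Odd q) (hJ : J(p | q) = -1) {k : ℚ} :
    RobinsonRel (q : ℚ) p k ↔ k.den.Coprime (p * q) := by
  have hp_odd : Odd p := Nat.odd_iff.mpr (by omega)
  have hpq : p.Coprime q := by
    by_contra hpq
    rw [jacobiSym.eq_zero_iff.mpr ⟨hq.ne_zero, by exact_mod_cast hpq⟩] at hJ
    exact absurd hJ (by decide)
  refine ⟨fun h ↦ Nat.Coprime.mul_right ?_ ?_, fun hk ↦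
    robinsonRel_of_coprime_den hp_odd hq_odd hpq hk (Or.inl hp4)⟩
  · have hJ' : J(-q | p) = -1 := by
      rw [jacobiSym_neg_of_one_mod_four q hp4,
        ← jacobiSym.quadratic_reciprocity_one_mod_four hp4 hq_odd, hJ]
    exact (hp.coprime_iff_not_dvd.mpr (not_dvd_den_of_jacobiSym_neg_eq_neg_one hp hJ' h)).symm
  · exact (hq.coprime_iff_not_dvd.mpr (not_dvd_den_of_jacobiSym_eq_neg_one hq hJ h)).symm

theorem robinsonRel_one_iff_coprime_den {p : ℕ} (hp : p.Prime) (hp4 : p % 4 = 3) {k : ℚ} :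
    RobinsonRel (1 : ℚ) p k ↔ k.den.Coprime (2 * p) := by
  have hp_odd : Odd p := Nat.odd_iff.mpr (by omega)
  constructor
  · intro h
    have hJ : J(-(1 : ℕ) | p) = -1 := by
      rw [Nat.cast_one, jacobiSym.at_neg_one hp_odd, ZMod.χ₄_nat_three_mod_four hp4]
    have h2 : ¬ 2 ∣ k.den := not_two_dvd_den_of_mod_four_eq_three hp4 h
    have hpk : ¬ p ∣ k.den :=
      not_dvd_den_of_jacobiSym_neg_eq_neg_one hp hJ (by exact_mod_cast h)
    exact Nat.Coprime.mul_right (Nat.prime_two.coprime_iff_not_dvd.mpr h2).symm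
      (hp.coprime_iff_not_dvd.mpr hpk).symm
  · intro hk
    have := robinsonRel_of_coprime_den (k := k) hp_odd odd_one p.coprime_one_right
      (by rw [mul_one]; exact hk.coprime_mul_left_right)
      (Or.inr ⟨by rwa [mul_one], Nat.coprime_two_right.mp hk.coprime_mul_right_right⟩)
    exact_mod_cast this

theorem exists_robinsonRel_iff_coprime_den {l : ℕ} (hl : l.Prime) :
    ∃ a b N : ℕ, a ≠ 0 ∧ b ≠ 0 ∧ l ∣ N ∧
      ∀ k : ℚ, RobinsonRel (a : ℚ) b k ↔ k.den.Coprime N := by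
  rcases hl.eq_two_or_odd' with rfl | hodd
  · exact ⟨1, 3, 2 * 3, one_ne_zero, three_ne_zero, dvd_mul_right 2 3, fun k ↦ by
      rw [Nat.cast_one]
      exact robinsonRel_one_iff_coprime_den Nat.prime_three rfl⟩
  · obtain ⟨p, hp, hp4, hJ⟩ := exists_prime_one_mod_four_jacobiSym_eq_neg_one hl hodd
    exact ⟨l, p, p * l, hl.ne_zero, hp.ne_zero, dvd_mul_left l p, fun k ↦
      robinsonRel_iff_coprime_den hp hp4 hl hodd hJ⟩

/-- Julia Robinson's definition of ℤ in ℚ. -/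
theorem robinson_def_int_in_rat (n : ℚ) :
    (∃ m : ℤ, n = m) ↔
      ∀ a b : ℚ, a ≠ 0 → b ≠ 0 →
        (((∃ x y z : ℚ, 2 + a * b * 0 ^ 2 + b * z ^ 2 = x ^ 2 + a * y ^ 2) ∧
            ∀ k : ℚ, (∃ x y z : ℚ, 2 + a * b * k ^ 2 + b * z ^ 2 = x ^ 2 + a * y ^ 2) →
              ∃ x y z : ℚ, 2 + a * b * (k + 1) ^ 2 + b * z ^ 2 = x ^ 2 + a * y ^ 2) →
          ∃ x y z : ℚ, 2 + a * b * n ^ 2 + b * z ^ 2 = x ^ 2 + a * y ^ 2) := by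
  constructor
  · rintro ⟨m, rfl⟩ a b - - ⟨zero, succ⟩
    exact robinsonRel_intCast zero succ m
  · intro h
    suffices hden : n.den = 1 from ⟨n.num, ((Rat.den_eq_one_iff n).mp hden).symm⟩
    by_contra hden
    obtain ⟨l, hl, hln⟩ := Nat.exists_prime_and_dvd hden
    obtain ⟨a, b, N, ha, hb, hlN, hiff⟩ := exists_robinsonRel_iff_coprime_den hl
    have zero : RobinsonRel (a : ℚ) b 0 := (hiff 0).mpr N.coprime_one_left
    have succ (k : ℚ) (hk : RobinsonRel (a : ℚ) b k) : RobinsonRel (a : ℚ) b (k + 1) := by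
      rw [hiff] at hk ⊢
      rwa [show (k + 1).den = k.den from Rat.add_ofNat_den k 1]
    have hn : RobinsonRel (a : ℚ) b n :=
      h a b (by exact_mod_cast ha) (by exact_mod_cast hb) ⟨zero, succ⟩
    exact Nat.not_coprime_of_dvd_of_dvd hl.one_lt hln hlN ((hiff n).mp hn)
end

section
/- Let p be a prime with p ≡ 3 (mod 4). Then for every t in the field ℚ_p of p-adic numbers, t lies in the ring ℤ_p of p-adic integers (i.e., ‖t‖_p ≤ 1) if and only if there exist x, y, z ∈ ℚ_p with 2 + p·t² = x² + y² − p·z². -/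
/-!
Over a Henselian discrete valuation ring `R` with uniformizer `ϖ` whose residue field has no square
root of `-1`, the form `x² + y²` is anisotropic modulo `ϖ`, and so `ϖ ∣ a² + b²` forces `ϖ ∣ a` and
`ϖ ∣ b`. Clear denominators in `2 + ϖ t² = x² + y² - ϖ z²`, with common denominator `d`, to get
`2 d² + ϖ (T² + Z²) = X² + Y²`. If `ϖ ∣ d`, then `ϖ` divides `X` and `Y`, hence `ϖ²` divides
`ϖ (T² + Z²)`, hence `ϖ` divides `T` and `Z`; dividing everything by `ϖ` and iterating gives
`d ∣ T`, that is, `t ∈ R`. Conversely, for `t ∈ R` Hensel's lemma extracts a square root `x` of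
`1 + ϖ t²`, and `(x, 1, 0)` is a solution.
-/

open IsLocalRing IsLocalization Polynomial

section NegOneNotSquare

theorem two_ne_zero_of_not_isSquare_neg_one {R : Type*} [Ring R]
    (h : ¬IsSquare (-1 : R)) : (2 : R) ≠ 0 := by
  contrapose! h
  have neg_one_eq_one : (-1 : R) = 1 := neg_eq_of_add_eq_zero_left (one_add_one_eq_two.trans h)
  rw [neg_one_eq_one]
  exact IsSquare.one

theorem eq_zero_of_sq_add_sq_eq_zero {F : Type*} [Field F] (h : ¬IsSquare (-1 : F)) {a b : F}
    (hab : a ^ 2 + b ^ 2 = 0) : a = 0 := by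
  by_contra ha
  refine h ⟨b / a, ?_⟩
  field_simp
  linear_combination -hab

theorem mem_maximalIdeal_of_sq_add_sq_mem {R : Type*} [CommRing R] [IsLocalRing R]
    (h : ¬IsSquare (-1 : ResidueField R)) {a b : R} (hab : a ^ 2 + b ^ 2 ∈ maximalIdeal R) :
    a ∈ maximalIdeal R := by
  rw [← residue_eq_zero_iff] at hab ⊢
  rw [map_add, map_pow, map_pow] at hab
  exact eq_zero_of_sq_add_sq_eq_zero h hab

theorem dvd_of_dvd_sq_add_sq {R : Type*} [CommRing R] [IsDomain R] [IsDiscreteValuationRing R]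
    {ϖ : R} (hϖ : Irreducible ϖ) (h : ¬IsSquare (-1 : ResidueField R)) {a b : R}
    (hab : ϖ ∣ a ^ 2 + b ^ 2) : ϖ ∣ a := by
  rw [← Ideal.mem_span_singleton, ← hϖ.maximalIdeal_eq] at hab ⊢
  exact mem_maximalIdeal_of_sq_add_sq_mem h hab

end NegOneNotSquare

section Descent

theorem exists_eq_mul_of_mul_sq_add_eq {R : Type*} [CommRing R] [NoZeroDivisors R] {ϖ : R}
    (hϖ : ϖ ≠ 0) (hdvd : ∀ {a b : R}, ϖ ∣ a ^ 2 + b ^ 2 → ϖ ∣ a) {r d t x y z : R}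
    (h : r * (ϖ * d) ^ 2 + ϖ * t ^ 2 = x ^ 2 + y ^ 2 - ϖ * z ^ 2) :
    ∃ t' x' y' z', t = ϖ * t' ∧ r * d ^ 2 + ϖ * t' ^ 2 = x' ^ 2 + y' ^ 2 - ϖ * z' ^ 2 := by
  have hxy : ϖ ∣ x ^ 2 + y ^ 2 := ⟨r * ϖ * d ^ 2 + t ^ 2 + z ^ 2, by linear_combination -h⟩
  obtain ⟨x', rfl⟩ := hdvd hxy
  obtain ⟨y', rfl⟩ := hdvd (add_comm _ (y ^ 2) ▸ hxy)
  have htz : ϖ ∣ t ^ 2 + z ^ 2 :=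
    ⟨x' ^ 2 + y' ^ 2 - r * d ^ 2, mul_left_cancel₀ hϖ (by linear_combination h)⟩
  obtain ⟨t', rfl⟩ := hdvd htz
  obtain ⟨z', rfl⟩ := hdvd (add_comm _ (z ^ 2) ▸ htz)
  exact ⟨t', x', y', z', rfl, mul_left_cancel₀ (pow_ne_zero 2 hϖ) (by linear_combination h)⟩

theorem pow_dvd_of_mul_sq_add_eq {R : Type*} [CommRing R] [NoZeroDivisors R] {ϖ : R}
    (hϖ : ϖ ≠ 0) (hdvd : ∀ {a b : R}, ϖ ∣ a ^ 2 + b ^ 2 → ϖ ∣ a) {r : R} (n : ℕ) {t x y z : R}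
    (h : r * (ϖ ^ n) ^ 2 + ϖ * t ^ 2 = x ^ 2 + y ^ 2 - ϖ * z ^ 2) : ϖ ^ n ∣ t := by
  induction n generalizing t x y z with
  | zero => simp
  | succ n ih =>
    rw [pow_succ' ϖ] at h ⊢
    obtain ⟨t', x', y', z', rfl, h'⟩ := exists_eq_mul_of_mul_sq_add_eq hϖ hdvd h
    exact mul_dvd_mul_left ϖ (ih h')

variable {R : Type*} [CommRing R] [IsDomain R] [IsDiscreteValuationRing R] {ϖ : R}

theorem dvd_of_mul_sq_add_eq (hϖ : Irreducible ϖ) (hR : ¬IsSquare (-1 : ResidueField R))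
    {r d t x y z : R} (hd : d ≠ 0)
    (h : r * d ^ 2 + ϖ * t ^ 2 = x ^ 2 + y ^ 2 - ϖ * z ^ 2) : d ∣ t := by
  obtain ⟨n, u, rfl⟩ := IsDiscreteValuationRing.eq_unit_mul_pow_irreducible hd hϖ
  rw [mul_pow, ← mul_assoc] at h
  exact Units.mul_left_dvd.2 <|
    pow_dvd_of_mul_sq_add_eq hϖ.ne_zero (dvd_of_dvd_sq_add_sq hϖ hR) n h

theorem isInteger_of_add_mul_sq_eq {K : Type*} [Field K] [Algebra R K] [IsFractionRing R K]
    (hϖ : Irreducible ϖ) (hR : ¬IsSquare (-1 : ResidueField R)) {r : R} {t x y z : K}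
    (h : algebraMap R K r + algebraMap R K ϖ * t ^ 2
      = x ^ 2 + y ^ 2 - algebraMap R K ϖ * z ^ 2) : IsInteger R t := by
  classical
  obtain ⟨⟨d, hd⟩, hint⟩ :=
    exist_integer_multiples_of_finset (nonZeroDivisors R) ({t, x, y, z} : Finset K)
  simp only [Finset.forall_mem_insert, Finset.mem_singleton, forall_eq, Algebra.smul_def] at hint
  obtain ⟨⟨T, hT⟩, ⟨X, hX⟩, ⟨Y, hY⟩, ⟨Z, hZ⟩⟩ := hint
  have cleared : r * d ^ 2 + ϖ * T ^ 2 = X ^ 2 + Y ^ 2 - ϖ * Z ^ 2 := by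
    apply IsFractionRing.injective R K
    simp only [map_add, map_sub, map_mul, map_pow, hT, hX, hY, hZ]
    linear_combination algebraMap R K d ^ 2 * h
  have d_ne_zero : d ≠ 0 := nonZeroDivisors.ne_zero hd
  obtain ⟨s, rfl⟩ := dvd_of_mul_sq_add_eq hϖ hR d_ne_zero cleared
  rw [map_mul] at hT
  exact ⟨s, mul_left_cancel₀ (IsFractionRing.to_map_eq_zero_iff.not.2 d_ne_zero) hT⟩

end Descent

section Hensel

theorem isSquare_of_sq_sub_mem {R : Type*} [CommRing R] {I : Ideal R} [HenselianRing R I]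
    {a b : R} (hb : IsUnit (Ideal.Quotient.mk I (2 * b))) (hab : b ^ 2 - a ∈ I) : IsSquare a := by
  obtain ⟨x, hx, -⟩ := HenselianRing.is_henselian (X ^ 2 - C a) (monic_X_pow_sub_C a two_ne_zero) b
    (by simpa using hab) (by simpa [one_add_one_eq_two] using hb)
  have x_sq_sub : x ^ 2 - a = 0 := by simpa using hx
  exact ⟨x, by linear_combination -x_sq_sub⟩

theorem isSquare_one_add_of_mem_maximalIdeal {R : Type*} [CommRing R] [IsLocalRing R]
    [HenselianRing R (maximalIdeal R)] (h2 : (2 : ResidueField R) ≠ 0) {a : R}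
    (ha : a ∈ maximalIdeal R) : IsSquare (1 + a) := by
  refine isSquare_of_sq_sub_mem (I := maximalIdeal R) (b := 1) ?_ (by simpa using ha)
  rw [mul_one]
  exact (map_ofNat (residue R) 2 ▸ h2.isUnit : IsUnit (residue R 2))

end Hensel

theorem zp_def_in_qp_general {R K : Type*} [CommRing R] [IsDomain R] [IsDiscreteValuationRing R]
    [HenselianRing R (maximalIdeal R)] [Field K] [Algebra R K] [IsFractionRing R K] {ϖ : R}
    (hϖ : Irreducible ϖ) (hR : ¬IsSquare (-1 : ResidueField R)) (t : K) :
    IsInteger R t ↔ ∃ x y z : K,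
      2 + algebraMap R K ϖ * t ^ 2 = x ^ 2 + y ^ 2 - algebraMap R K ϖ * z ^ 2 := by
  constructor
  · rintro ⟨s, rfl⟩
    have mem : ϖ * s ^ 2 ∈ maximalIdeal R :=
      Ideal.mul_mem_right _ _ ((mem_maximalIdeal ϖ).2 hϖ.not_isUnit)
    obtain ⟨x, hx⟩ :=
      isSquare_one_add_of_mem_maximalIdeal (two_ne_zero_of_not_isSquare_neg_one hR) mem
    have hxK := congrArg (algebraMap R K) hx
    simp only [map_add, map_mul, map_pow, map_one] at hxK
    exact ⟨algebraMap R K x, 1, 0, by linear_combination hxK⟩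
  · rintro ⟨x, y, z, h⟩
    rw [← map_ofNat (algebraMap R K) 2] at h
    exact isInteger_of_add_mul_sq_eq hϖ hR h

section PadicInt

variable {p : ℕ} [Fact p.Prime]

theorem isInteger_padicInt_iff_norm_le_one {t : ℚ_[p]} : IsInteger ℤ_[p] t ↔ ‖t‖ ≤ 1 :=
  ⟨fun ⟨s, hs⟩ ↦ hs ▸ s.norm_le_one, fun ht ↦ ⟨⟨t, ht⟩, rfl⟩⟩

theorem not_isSquare_neg_one_residueField_padicInt (hp : p % 4 = 3) :
    ¬IsSquare (-1 : ResidueField ℤ_[p]) := fun h ↦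
  ZMod.exists_sq_eq_neg_one_iff.1 (by simpa using h.map (PadicInt.residueField (p := p))) hp

end PadicInt

/-- For a prime `p ≡ 3 mod 4`, the ring `ℤ_p` of `p`-adic integers is defined in `ℚ_p`
by the formula `∃ x y z, 2 + p t² = x² + y² - p z²`. -/
theorem zp_def_in_qp (p : ℕ) [Fact p.Prime] (hp4 : p % 4 = 3) (t : ℚ_[p]) :
    ‖t‖ ≤ 1 ↔ ∃ x y z : ℚ_[p], 2 + (p : ℚ_[p]) * t ^ 2 = x ^ 2 + y ^ 2 - (p : ℚ_[p]) * z ^ 2 := by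
  simpa only [map_natCast, isInteger_padicInt_iff_norm_le_one] using
    zp_def_in_qp_general PadicInt.irreducible_p
      (not_isSquare_neg_one_residueField_padicInt hp4) t
end

section
/- Let p be an odd prime. Then for every x in the field ℚ_p of p-adic numbers, x lies in the ring ℤ_p of p-adic integers (i.e., ‖x‖_p ≤ 1) if and only if there exists y ∈ ℚ_p with 1 + p·x² = y². -/
/-!
Let `R` be a Henselian valuation ring with fraction field `K`, let `ϖ` be irreducible in `R` and let
`n ≥ 2` be invertible in `R`. If `x` is in `R`, then `1 + ϖ x ^ n` is congruent to `1` modulo the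
maximal ideal, so it has an `n`-th root by Hensel's lemma. If `x` is not in `R`, then `t = x⁻¹` is a
non-unit of `R`, and clearing denominators in `1 + ϖ x ^ n = y ^ n` gives `ϖ = z ^ n - t ^ n` with
`z = t y`. As `R` is integrally closed, `z` lies in `R`, and it is not a unit since `ϖ` and `t` are
not. Of `z` and `t`, the one dividing the other is a non-unit whose square divides `ϖ`, which is
absurd.
-/

open IsLocalRing IsLocalization Polynomial

theorem exists_pow_eq_one_add_of_mem {R : Type*} [CommRing R] {I : Ideal R} [HenselianRing R I]
    {n : ℕ} (hn : IsUnit (n : R)) {a : R} (ha : a ∈ I) : ∃ b : R, b ^ n = 1 + a := by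
  nontriviality R
  have hn0 : n ≠ 0 := by
    rintro rfl
    exact not_isUnit_zero (Nat.cast_zero (R := R) ▸ hn)
  have eval_mem : (X ^ n - C (1 + a)).eval 1 ∈ I := by simpa using ha
  have eval_derivative : (X ^ n - C (1 + a)).derivative.eval 1 = (n : R) := by
    simp [derivative_X_pow]
  obtain ⟨b, hb, -⟩ := HenselianRing.is_henselian _ (monic_X_pow_sub_C (1 + a) hn0) 1 eval_mem
    (eval_derivative ▸ hn.map (Ideal.Quotient.mk I))
  exact ⟨b, by simpa [sub_eq_zero] using hb⟩

theorem not_squarefree_pow_sub_pow {R : Type*} [CommRing R] [PreValuationRing R] {a b : R}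
    (ha : ¬IsUnit a) (hb : ¬IsUnit b) {n : ℕ} (hn : 2 ≤ n) : ¬Squarefree (a ^ n - b ^ n) := by
  have mul_self_dvd_pow {c d : R} (h : c ∣ d) : c * c ∣ d ^ n :=
    sq c ▸ (pow_dvd_pow_of_dvd h 2).trans (pow_dvd_pow d hn)
  intro hsq
  obtain hab | hba := ValuationRing.dvd_total a b
  · exact ha <| hsq a <| dvd_sub (mul_self_dvd_pow dvd_rfl) (mul_self_dvd_pow hab)
  · exact hb <| hsq b <| dvd_sub (mul_self_dvd_pow hba) (mul_self_dvd_pow dvd_rfl)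

section FractionField

variable {R K : Type*} [CommRing R] [IsDomain R] [ValuationRing R] [Field K] [Algebra R K]
  [IsFractionRing R K]

theorem exists_algebraMap_eq_inv_of_not_isInteger {x : K} (hx : ¬IsInteger R x) :
    ∃ t : R, ¬IsUnit t ∧ algebraMap R K t = x⁻¹ := by
  obtain ⟨t, ht⟩ := (ValuationRing.isInteger_or_isInteger R x).resolve_left hx
  refine ⟨t, ?_, ht⟩
  rintro ⟨u, rfl⟩
  exact hx ⟨↑u⁻¹, by rw [map_units_inv, ht, inv_inv]⟩

theorem isInteger_of_one_add_mul_pow_eq_pow {ϖ : R} (hϖ : Irreducible ϖ) {n : ℕ} (hn : 2 ≤ n)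
    {x y : K} (hxy : 1 + algebraMap R K ϖ * x ^ n = y ^ n) : IsInteger R x := by
  by_contra hx
  obtain ⟨t, ht, htx⟩ := exists_algebraMap_eq_inv_of_not_isInteger hx
  have hx0 : x ≠ 0 := by
    rintro rfl
    exact hx ⟨0, map_zero _⟩
  have h_pow : (x⁻¹ * y) ^ n = algebraMap R K (ϖ + t ^ n) := calc
    (x⁻¹ * y) ^ n = x⁻¹ ^ n + algebraMap R K ϖ * (x⁻¹ * x) ^ n := by
      rw [mul_pow, ← hxy]
      ring
    _ = algebraMap R K (ϖ + t ^ n) := by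
      rw [inv_mul_cancel₀ hx0, one_pow, mul_one, map_add, map_pow, htx, add_comm]
  obtain ⟨z, hz⟩ := IsIntegrallyClosed.exists_algebraMap_eq_of_isIntegral_pow (R := R)
    (by lia : 0 < n) (h_pow ▸ isIntegral_algebraMap)
  have hzt : z ^ n = ϖ + t ^ n :=
    IsFractionRing.injective R K (by rw [map_pow, hz, h_pow])
  have hz_nonunit : ¬IsUnit z := by
    have h_mem : z ^ n ∈ maximalIdeal R :=
      hzt ▸ add_mem hϖ.not_isUnit (Ideal.pow_mem_of_mem _ ht n (by lia))
    exact Ideal.IsPrime.mem_of_pow_mem inferInstance n h_mem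
  exact not_squarefree_pow_sub_pow hz_nonunit ht hn
    (by simpa only [hzt, add_sub_cancel_right] using hϖ.squarefree)

theorem zp_def_in_qp_odd_general [HenselianRing R (maximalIdeal R)] {ϖ : R} (hϖ : Irreducible ϖ)
    {n : ℕ} (hn : 2 ≤ n) (hn_unit : IsUnit (n : R)) (x : K) :
    IsInteger R x ↔ ∃ y : K, 1 + algebraMap R K ϖ * x ^ n = y ^ n := by
  constructor
  · rintro ⟨a, rfl⟩
    have h_mem : ϖ * a ^ n ∈ maximalIdeal R := Ideal.mul_mem_right _ _ hϖ.not_isUnit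
    obtain ⟨b, hb⟩ := exists_pow_eq_one_add_of_mem hn_unit h_mem
    exact ⟨algebraMap R K b, by simp only [← map_pow, hb, map_add, map_one, map_mul]⟩
  · rintro ⟨y, hxy⟩
    exact isInteger_of_one_add_mul_pow_eq_pow hϖ hn hxy

end FractionField

section Padic

variable {p : ℕ} [Fact p.Prime]

theorem padic_isInteger_iff_norm_le_one {x : ℚ_[p]} : IsInteger ℤ_[p] x ↔ ‖x‖ ≤ 1 :=
  ⟨fun ⟨a, ha⟩ ↦ ha ▸ a.norm_le_one, fun hx ↦ ⟨⟨x, hx⟩, rfl⟩⟩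

theorem padicInt_isUnit_natCast_iff {n : ℕ} : IsUnit (n : ℤ_[p]) ↔ p.Coprime n :=
  PadicInt.isUnit_iff.trans PadicInt.norm_natCast_eq_one_iff

end Padic

/-- For an odd prime `p`, `ℤ_p = {x ∈ ℚ_p : ∃ y, 1 + p x² = y²}`. -/
theorem zp_def_in_qp_odd (p : ℕ) [Fact p.Prime] (hodd : p ≠ 2) (x : ℚ_[p]) :
    ‖x‖ ≤ 1 ↔ ∃ y : ℚ_[p], 1 + (p : ℚ_[p]) * x ^ 2 = y ^ 2 := by
  have two_isUnit : IsUnit ((2 : ℕ) : ℤ_[p]) :=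
    padicInt_isUnit_natCast_iff.2 <| (Nat.coprime_primes Fact.out Nat.prime_two).2 hodd
  simpa only [padic_isInteger_iff_norm_le_one, map_natCast] using
    zp_def_in_qp_odd_general PadicInt.irreducible_p le_rfl two_isUnit x
end

section
/- Let β ∈ ℝ be an algebraic integer (integral over ℤ) such that every complex root z of the minimal polynomial of β over ℚ is real and satisfies |z| ≤ 2. Then there exists a root of unity α ∈ ℂ (i.e., αⁿ = 1 for some n ≥ 1) such that β = α + α⁻¹. -/
/-!
Write `β = α + α⁻¹`, so that `α` is a root of `X² - βX + 1` and hence an algebraic integer. For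
every conjugate `z` of `α`, the number `z + z⁻¹` is a conjugate of `β`, hence a real number in
`[-2, 2]`, which forces `‖z‖ = 1`. By Kronecker's theorem, `α` is a root of unity.
-/

open Polynomial IntermediateField

theorem exists_ne_zero_add_inv_eq {K : Type*} [Field K] [IsAlgClosed K] (b : K) :
    ∃ a : K, a ≠ 0 ∧ a + a⁻¹ = b := by
  have hmonic : IsMonicOfDegree (X ^ 2 - C b * X + C 1) 2 := isMonicOfDegree_sub_add_two b 1
  obtain ⟨a, ha⟩ := IsAlgClosed.exists_root _ (degree_ne_of_natDegree_ne
    (hmonic.natDegree_eq.trans_ne two_ne_zero))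
  have ha' : a ^ 2 - b * a + 1 = 0 := by simpa using ha
  have ha0 : a ≠ 0 := by
    rintro rfl
    simp at ha'
  refine ⟨a, ha0, ?_⟩
  field_simp
  linear_combination ha'

theorem isIntegral_of_add_of_mul {R A : Type*} [CommRing R] [CommRing A] [Algebra R A] {x y : A}
    (hadd : IsIntegral R (x + y)) (hmul : IsIntegral R (x * y)) : IsIntegral R x := by
  let s : integralClosure R A := ⟨x + y, hadd⟩
  let p : integralClosure R A := ⟨x * y, hmul⟩
  have hroot : aeval x (X ^ 2 - C s * X + C p) = 0 := by
    have hs : algebraMap (integralClosure R A) A s = x + y := rfl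
    have hp : algebraMap (integralClosure R A) A p = x * y := rfl
    simp only [map_add, map_sub, map_mul, map_pow, aeval_X, aeval_C, hs, hp]
    ring
  exact isIntegral_trans x ⟨_, by monicity!, hroot⟩

open scoped ComplexOrder in
theorem norm_eq_one_of_add_inv_eq_ofReal {z : ℂ} {r : ℝ} (hz : z ≠ 0) (hr : |r| ≤ 2)
    (h : z + z⁻¹ = r) : ‖z‖ = 1 := by
  have hquad : z ^ 2 - r * z + 1 = 0 := by
    rw [← h]
    field_simp
    ring
  have hsq : (2 * z - r) ^ 2 = ((r ^ 2 - 4 : ℝ) : ℂ) := by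
    push_cast
    linear_combination 4 * hquad
  have hdisc : r ^ 2 - 4 ≤ 0 := by linarith [sq_le_sq' (abs_le.1 hr).1 (abs_le.1 hr).2]
  have hre : 2 * z.re = r := by
    have : (2 * z - r).re = 0 := Complex.sq_nonpos_iff.1 (hsq ▸ by exact_mod_cast hdisc)
    simpa [sub_eq_zero] using this
  have hnormSq : Complex.normSq z = 1 := by
    have hquad_re : z.re * z.re - z.im * z.im - r * z.re + 1 = 0 := by
      simpa [pow_two] using congrArg Complex.re hquad
    rw [Complex.normSq_apply]
    linear_combination -hquad_re + z.re * hre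
  rw [Complex.norm_def, hnormSq, Real.sqrt_one]

theorem aeval_add_inv_minpoly_add_inv {K E F : Type*} [Field K] [Field E] [Field F] [Algebra K E]
    [Algebra K F] {x : E} {z : F} (hx : IsIntegral K x) (hz : aeval z (minpoly K x) = 0) :
    aeval (z + z⁻¹) (minpoly K (x + x⁻¹)) = 0 := by
  let y : K⟮x⟯ := AdjoinSimple.gen K x
  obtain ⟨φ, hφ⟩ : ∃ φ : K⟮x⟯ →ₐ[K] F, φ y = z :=
    ⟨_, algHomAdjoinIntegralEquiv_symm_apply_gen K hx
      ⟨z, mem_aroots.2 ⟨minpoly.ne_zero hx, hz⟩⟩⟩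
  have hminpoly : minpoly K (x + x⁻¹) = minpoly K (y + y⁻¹) :=
    minpoly.algebraMap_eq (algebraMap K⟮x⟯ E).injective (y + y⁻¹)
  rw [hminpoly, ← hφ, ← map_inv₀, ← map_add, aeval_algHom_apply, minpoly.aeval, map_zero]

theorem exists_pow_eq_one_of_norm_roots_minpoly_le_one {L : Type*} [Field L] [CharZero L] {x : L}
    (hx₀ : x ≠ 0) (hx : IsIntegral ℤ x) (h : ∀ z : ℂ, aeval z (minpoly ℚ x) = 0 → ‖z‖ ≤ 1) :
    ∃ n : ℕ, 1 ≤ n ∧ x ^ n = 1 := by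
  have : FiniteDimensional ℚ ℚ⟮x⟯ := adjoin.finiteDimensional hx.tower_top
  have : NumberField ℚ⟮x⟯ := ⟨⟩
  let y : ℚ⟮x⟯ := AdjoinSimple.gen ℚ x
  have hy : IsIntegral ℤ y := coe_isIntegral_iff.1 hx
  have hy₀ : y ≠ 0 := fun h0 ↦ hx₀ (congrArg Subtype.val h0)
  have hnorm (φ : ℚ⟮x⟯ →+* ℂ) : ‖φ y‖ ≤ 1 := by
    have hφ : φ y ∈ (minpoly ℚ y).rootSet ℂ :=
      (NumberField.Embeddings.range_eval_eq_rootSet_minpoly _ ℂ y).subset ⟨φ, rfl⟩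
    exact h _ (minpoly_gen ℚ x ▸ aeval_eq_zero_of_mem_rootSet hφ)
  obtain ⟨n, hn, hyn⟩ := NumberField.Embeddings.pow_eq_one_of_norm_le_one _ ℂ hy₀ hy hnorm
  exact ⟨n, hn, congrArg Subtype.val hyn⟩

theorem totally_real_integer_eq_add_inv_root_of_unity_general {L : Type*} [Field L] [IsAlgClosed L]
    [CharZero L] (β : L) (hint : IsIntegral ℤ β)
    (h : ∀ z : ℂ, aeval z (minpoly ℚ β) = 0 → ∃ r : ℝ, z = (r : ℂ) ∧ |r| ≤ 2) :
    ∃ α : L, (∃ n : ℕ, 1 ≤ n ∧ α ^ n = 1) ∧ β = α + α⁻¹ := by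
  obtain ⟨α, hα₀, rfl⟩ := exists_ne_zero_add_inv_eq β
  have hα : IsIntegral ℤ α :=
    isIntegral_of_add_of_mul hint (by simpa only [mul_inv_cancel₀ hα₀] using isIntegral_one)
  refine ⟨α, exists_pow_eq_one_of_norm_roots_minpoly_le_one hα₀ hα fun z hz ↦ ?_, rfl⟩
  obtain rfl | hz₀ := eq_or_ne z 0
  · simp only [norm_zero, zero_le_one]
  obtain ⟨r, hzr, hr⟩ := h (z + z⁻¹) (aeval_add_inv_minpoly_add_inv hα.tower_top hz)
  exact (norm_eq_one_of_add_inv_eq_ofReal hz₀ hr hzr).le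

/-- A totally real algebraic integer all of whose conjugates have absolute value at most 2
is of the form `α + α⁻¹` for some root of unity `α`. -/
theorem totally_real_integer_eq_add_inv_root_of_unity (β : ℝ) (hint : IsIntegral ℤ β)
    (h : ∀ z : ℂ, Polynomial.aeval z (minpoly ℚ β) = 0 → ∃ r : ℝ, z = (r : ℂ) ∧ |r| ≤ 2) :
    ∃ α : ℂ, (∃ n : ℕ, 1 ≤ n ∧ α ^ n = 1) ∧ (β : ℂ) = α + α⁻¹ :=
  totally_real_integer_eq_add_inv_root_of_unity_general (β : ℂ) (hint.algebraMap (B := ℂ))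
    (minpoly.algebraMap_eq (A := ℚ) (algebraMap ℝ ℂ).injective β ▸ h)
end

section
/- For a real number M, the set of algebraic integers β ∈ ℝ such that every complex root z of the minimal polynomial of β over ℚ is real and satisfies 0 < z < M is infinite if and only if M ≥ 4. In other words, the minimum of all M ∈ ℝ such that there are infinitely many totally real algebraic integers t with 0 ≪ t ≪ M equals 4. -/
/-!
If an algebraic integer of degree `n` has all its conjugates in an interval of length `4 * q`, then
the Vandermonde determinant of the conjugates has absolute value at least `1`, because its square
is a nonzero integer, the discriminant. Replacing the powers in the columns by rescaled monic
Chebyshev polynomials, which are at most `2 q ^ k` on the interval, bounds the same determinant by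
`n! ∏ k < n, 2 q ^ k`. For `q < 1` this tends to `0`, so the degree is bounded, and only finitely
many algebraic integers have bounded degree and bounded conjugates. In the other direction, the
numbers `2 + 2 cos (π / (2 n))` have all their conjugates in `(0, 4)`, because every complex root of
a Chebyshev polynomial lies in `(-1, 1)`.
-/

open Polynomial Polynomial.Chebyshev Filter Topology Set
open scoped Nat IntermediateField

/-- The real algebraic integers all of whose conjugates, taken as the complex roots of the minimal
polynomial over `ℚ`, are real and lie in `s`. For `s = Ioo 0 M` these are the totally real
algebraic integers `t` with `0 ≪ t ≪ M`. -/
def totallyRealIntegers (s : Set ℝ) : Set ℝ :=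
  {β | IsIntegral ℤ β ∧ ∀ z : ℂ, aeval z (minpoly ℚ β) = 0 → ∃ r : ℝ, z = r ∧ r ∈ s}

theorem totallyRealIntegers_mono {s t : Set ℝ} (hst : s ⊆ t) :
    totallyRealIntegers s ⊆ totallyRealIntegers t :=
  fun _ hβ ↦ ⟨hβ.1, fun z hz ↦ (hβ.2 z hz).imp fun _ hr ↦ ⟨hr.1, hst hr.2⟩⟩

theorem exists_monic_abs_eval_le (c r : ℝ) (k : ℕ) :
    ∃ p : ℝ[X], p.Monic ∧ p.natDegree = k ∧
      ∀ x ∈ Metric.closedBall c r, |p.eval x| ≤ 2 * (r / 2) ^ k := by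
  let q : ℝ[X] := C ((2 : ℝ) ^ (k - 1))⁻¹ * T ℝ k
  have hq : q.Monic := by simp [q, Monic]
  have hq_deg : q.natDegree = k := by simp [q, natDegree_C_mul]
  refine ⟨(q.scaleRoots r).comp (X - C c), ((monic_scaleRoots_iff r).mpr hq).comp_X_sub_C c, ?_,
    fun x hx ↦ ?_⟩
  · simp [natDegree_comp, hq_deg]
  rw [Metric.mem_closedBall, Real.dist_eq] at hx
  have hr : 0 ≤ r := (abs_nonneg _).trans hx
  obtain ⟨y, hy, hxy⟩ : ∃ y : ℝ, |y| ≤ 1 ∧ x - c = r * y := by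
    refine ⟨(x - c) / r, ?_, (mul_div_cancel_of_imp' fun h ↦ ?_).symm⟩
    · rw [abs_div, abs_of_nonneg hr]
      exact div_le_one_of_le₀ hx hr
    · exact abs_nonpos_iff.mp (hx.trans h.le)
  -- This is strict only for `k = 0`, where `k - 1` truncates.
  have hpow : (2 : ℝ) ^ k ≤ 2 * 2 ^ (k - 1) := by
    rw [← pow_succ']
    exact pow_le_pow_right₀ one_le_two (by lia)
  calc |((q.scaleRoots r).comp (X - C c)).eval x|
      = r ^ k * ((2 ^ (k - 1))⁻¹ * |(T ℝ k).eval y|) := by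
        simp [hxy, scaleRoots_eval_mul, hq_deg, q, abs_mul, abs_of_nonneg hr]
    _ ≤ r ^ k * (2 ^ (k - 1))⁻¹ := by
        gcongr
        exact mul_le_of_le_one_right (by positivity) (abs_eval_T_real_le_one k hy)
    _ ≤ r ^ k * (2 / 2 ^ k) := by
        gcongr
        rw [inv_eq_one_div, div_le_div_iff₀ (by positivity) (by positivity), one_mul]
        exact hpow
    _ = 2 * (r / 2) ^ k := by rw [div_pow]; ring

theorem abv_det_le_factorial_smul_prod {n R S : Type*} [Fintype n] [DecidableEq n] [CommRing R]
    [Nontrivial R] [CommRing S] [LinearOrder S] [IsStrictOrderedRing S] {abv : AbsoluteValue R S}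
    {A : Matrix n n R} {B : n → S} (hA : ∀ i j, abv (A i j) ≤ B j) :
    abv A.det ≤ (Fintype.card n)! • ∏ j, B j := by
  have hterm (σ : Equiv.Perm n) : abv (Equiv.Perm.sign σ • ∏ j, A (σ j) j) ≤ ∏ j, B j := by
    rw [abv.map_units_int_smul, abv.map_prod]
    exact Finset.prod_le_prod (fun _ _ ↦ abv.nonneg _) fun j _ ↦ hA (σ j) j
  rw [Matrix.det_apply, ← Fintype.card_perm]
  exact (abv.sum_le _ _).trans (Finset.sum_le_card_nsmul _ _ _ fun σ _ ↦ hterm σ)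

theorem abs_det_vandermonde_le {n : ℕ} {c r : ℝ} {v : Fin n → ℝ}
    (hv : ∀ i, v i ∈ Metric.closedBall c r) :
    |(Matrix.vandermonde v).det| ≤ n ! * ∏ k ∈ Finset.range n, 2 * (r / 2) ^ k := by
  choose p hp hp_deg hp_le using exists_monic_abs_eval_le c r
  rw [Matrix.det_eval_matrixOfPolynomials_eq_det_vandermonde v (fun j ↦ p j)
    (fun j ↦ hp_deg j) (fun j ↦ hp j), Finset.prod_range]
  simpa using abv_det_le_factorial_smul_prod (abv := AbsoluteValue.abs)
    (A := Matrix.of fun i j : Fin n ↦ (p j).eval (v i)) fun i j ↦ hp_le j (v i) (hv i)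

theorem tendsto_factorial_mul_prod_pow {a q : ℝ} (hq : |q| < 1) :
    Tendsto (fun n : ℕ ↦ n ! * ∏ k ∈ Finset.range n, a * q ^ k) atTop (𝓝 0) := by
  have hratio : Tendsto (fun n : ℕ ↦ ‖a * (n * q ^ n + q ^ n)‖) atTop (𝓝 0) := by
    simpa only [add_zero, mul_zero, norm_zero] using
      (((tendsto_self_mul_const_pow_of_abs_lt_one hq).add
        (tendsto_pow_atTop_nhds_zero_of_abs_lt_one hq)).const_mul a).norm
  refine (summable_of_ratio_norm_eventually_le (r := 1 / 2) (by norm_num) ?_).tendsto_atTop_zero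
  filter_upwards [hratio.eventually_le_const (by norm_num : (0 : ℝ) < 1 / 2)] with n hn
  calc _ = ‖a * (n * q ^ n + q ^ n)‖ * ‖n ! * ∏ k ∈ Finset.range n, a * q ^ k‖ := by
        rw [← norm_mul, Finset.prod_range_succ, Nat.factorial_succ]
        push_cast
        ring_nf
    _ ≤ _ := by gcongr

theorem one_le_norm_det_vandermonde_embeddings {K : Type*} [Field K] [NumberField K]
    (pb : PowerBasis ℚ K) (hpb : IsIntegral ℤ pb.gen) (e : Fin pb.dim ≃ (K →ₐ[ℚ] ℂ)) :
    1 ≤ ‖(Matrix.vandermonde fun i ↦ e i pb.gen).det‖ := by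
  have hint : IsIntegral ℤ (Algebra.discr ℚ pb.basis) :=
    Algebra.discr_isIntegral ℚ fun i ↦ by simpa using hpb.pow i
  obtain ⟨m, hm⟩ := IsIntegrallyClosed.isIntegral_iff.mp hint
  have hm0 : m ≠ 0 := by
    rintro rfl
    exact Algebra.discr_not_zero_of_basis ℚ pb.basis (by simpa using hm.symm)
  have hsq : (m : ℂ) = (Matrix.vandermonde fun i ↦ e i pb.gen).det ^ 2 := by
    rw [← Matrix.det_transpose, ← Algebra.embeddingsMatrixReindex_eq_vandermonde,
      ← Algebra.discr_eq_det_embeddingsMatrixReindex_pow_two, ← hm]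
    simp
  rw [← one_le_sq_iff₀ (norm_nonneg _), ← norm_pow, ← hsq, Complex.norm_intCast]
  exact_mod_cast Int.one_le_abs hm0

theorem exists_one_le_abs_det_vandermonde {s : Set ℝ} {β : ℝ} (hβ : β ∈ totallyRealIntegers s) :
    ∃ v : Fin (minpoly ℚ β).natDegree → ℝ, (∀ i, v i ∈ s) ∧ 1 ≤ |(Matrix.vandermonde v).det| := by
  have hβℚ : IsIntegral ℚ β := hβ.1.tower_top
  let pb := IntermediateField.adjoin.powerBasis hβℚ
  have : FiniteDimensional ℚ ℚ⟮β⟯ := pb.finite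
  have : NumberField ℚ⟮β⟯ := {}
  have hmin : minpoly ℚ pb.gen = minpoly ℚ β := IntermediateField.minpoly_gen ℚ β
  have hpb : IsIntegral ℤ pb.gen := by
    rw [← isIntegral_algebraMap_iff (algebraMap ℚ⟮β⟯ ℝ).injective]
    exact hβ.1
  let e : Fin pb.dim ≃ (ℚ⟮β⟯ →ₐ[ℚ] ℂ) := Fintype.equivOfCardEq <| by
    rw [Fintype.card_fin, ← pb.finrank, AlgHom.card]
  have hroot (i : Fin pb.dim) : aeval (e i pb.gen) (minpoly ℚ β) = 0 := by
    rw [← hmin, aeval_algHom_apply, minpoly.aeval, map_zero]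
  choose v hv hvs using fun i ↦ hβ.2 _ (hroot i)
  refine ⟨v, hvs, ?_⟩
  have hdet : (Matrix.vandermonde fun i ↦ e i pb.gen).det = ((Matrix.vandermonde v).det : ℂ) := by
    simp only [hv, Matrix.det_vandermonde]
    push_cast
    rfl
  have := one_le_norm_det_vandermonde_embeddings pb hpb e
  rwa [hdet, Complex.norm_real] at this

theorem finite_isIntegral_of_natDegree_le_of_norm_le (F : Type*) [Field F] [CharZero F]
    (d : ℕ) (B : ℝ) :
    {x : F | IsIntegral ℤ x ∧ (minpoly ℚ x).natDegree ≤ d ∧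
      ∀ z ∈ (minpoly ℚ x).aroots ℂ, ‖z‖ ≤ B}.Finite := by
  classical
  let N := ⌈max B 1 ^ d * d.choose (d / 2)⌉
  refine (bUnion_roots_finite (algebraMap ℤ F) d (Set.finite_Icc (-N) N)).subset ?_
  rintro x ⟨hx, hdeg, hB⟩
  have hmin := minpoly.isIntegrallyClosed_eq_field_fractions' ℚ hx
  simp_rw [mem_iUnion]
  refine ⟨minpoly ℤ x, ⟨?_, fun i ↦ ?_⟩, mem_rootSet.2 ⟨minpoly.ne_zero hx, minpoly.aeval ℤ x⟩⟩
  · rwa [hmin, (minpoly.monic hx).natDegree_map] at hdeg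
  · have hcoeff := coeff_bdd_of_roots_le (algebraMap ℚ ℂ) (minpoly.monic hx.tower_top)
      (IsAlgClosed.splits _) hdeg hB i
    rw [mem_Icc, ← abs_le, ← Int.cast_le (R := ℝ)]
    refine le_trans ?_ (hcoeff.trans (Int.le_ceil _))
    simp [hmin, coeff_map]

theorem finite_totallyRealIntegers_closedBall {c r : ℝ} (hr : r < 2) :
    (totallyRealIntegers (Metric.closedBall c r)).Finite := by
  wlog hr0 : 0 ≤ r generalizing r
  · exact (this (max_lt hr two_pos) (le_max_right r 0)).subset
      (totallyRealIntegers_mono (Metric.closedBall_subset_closedBall (le_max_left r 0)))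
  have hq : |r / 2| < 1 := by rw [abs_lt]; constructor <;> linarith
  obtain ⟨d, hd⟩ := eventually_atTop.mp
    ((tendsto_factorial_mul_prod_pow (a := 2) hq).eventually_lt_const one_pos)
  refine (finite_isIntegral_of_natDegree_le_of_norm_le ℝ d (‖c‖ + r)).subset fun β hβ ↦ ?_
  refine ⟨hβ.1, ?_, fun z hz ↦ ?_⟩
  · obtain ⟨v, hv, hdet⟩ := exists_one_le_abs_det_vandermonde hβ
    by_contra! hlt
    exact (hd _ hlt.le).not_ge (hdet.trans (abs_det_vandermonde_le hv))
  · obtain ⟨x, rfl, hx⟩ := hβ.2 z (mem_aroots'.mp hz).2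
    simpa using norm_le_of_mem_closedBall hx

theorem splits_T_real (n : ℕ) : (T ℝ n).Splits := by
  rw [splits_iff_card_roots, roots_T_real, Finset.card_val, Finset.card_image_of_injOn,
    Finset.card_range, natDegree_T, Int.natAbs_natCast]
  exact (Finset.range n).nodup_map_iff_injOn.mp (roots_T_real_nodup n)

theorem exists_abs_lt_one_of_eval_T_eq_zero {n : ℕ} {z : ℂ} (hz : (T ℂ n).eval z = 0) :
    ∃ x : ℝ, z = x ∧ |x| < 1 := by
  obtain ⟨x, rfl⟩ := (splits_T_real n).mem_range_of_isRoot (T_ne_zero ℝ n)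
    (i := algebraMap ℝ ℂ) (by rwa [map_T])
  have hx : (T ℝ n).eval x = 0 := by
    rwa [← algebraMap_eval_T, map_eq_zero] at hz
  refine ⟨x, rfl, ?_⟩
  by_contra! hx1
  have hT := one_le_abs_eval_T_real n hx1
  norm_num [hx] at hT

theorem aeval_T_comp_half_mul_X_sub_one {A : Type*} [Field A] [Algebra ℚ A] (n : ℤ) (x : A) :
    aeval x ((T ℚ n).comp (C 2⁻¹ * X - 1)) = (T A n).eval (x / 2 - 1) := by
  simp [aeval_comp, div_eq_inv_mul]

theorem two_add_two_mul_cos_mem_totallyRealIntegers {n : ℕ} (hn : n ≠ 0) :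
    2 + 2 * Real.cos (Real.pi / (2 * n)) ∈ totallyRealIntegers (Ioo 0 4) := by
  set β := 2 + 2 * Real.cos (Real.pi / (2 * n)) with hβ
  constructor
  · have hcos := Real.isIntegral_two_mul_cos_rat_mul_pi (1 / (2 * n))
    rw [show ((1 / (2 * n) : ℚ) : ℝ) * Real.pi = Real.pi / (2 * n) by push_cast; ring] at hcos
    exact (isIntegral_algebraMap (x := (2 : ℤ))).add hcos
  · intro z hz
    have hangle : (n : ℤ) * (Real.pi / (2 * n)) = Real.pi / 2 := by
      push_cast
      field_simp
    have hroot : aeval β ((T ℚ n).comp (C 2⁻¹ * X - 1)) = 0 := by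
      rw [aeval_T_comp_half_mul_X_sub_one,
        show β / 2 - 1 = Real.cos (Real.pi / (2 * n)) by rw [hβ]; ring,
        T_real_cos, hangle, Real.cos_pi_div_two]
    have hconj := aeval_eq_zero_of_dvd_aeval_eq_zero (minpoly.dvd ℚ β hroot) hz
    rw [aeval_T_comp_half_mul_X_sub_one] at hconj
    obtain ⟨x, hx, hx1⟩ := exists_abs_lt_one_of_eval_T_eq_zero hconj
    rw [abs_lt] at hx1
    refine ⟨2 + 2 * x, ?_, ?_, ?_⟩
    · push_cast
      linear_combination 2 * hx
    · linarith
    · linarith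

theorem infinite_totallyRealIntegers_Ioo_zero_four : (totallyRealIntegers (Ioo 0 4)).Infinite := by
  refine infinite_of_injective_forall_mem (fun m n hmn ↦ ?_)
    fun n : ℕ ↦ two_add_two_mul_cos_mem_totallyRealIntegers n.succ_ne_zero
  have hangle (k : ℕ) : Real.pi / (2 * (k.succ : ℕ)) ∈ Icc 0 Real.pi := by
    refine ⟨by positivity, div_le_self Real.pi_pos.le ?_⟩
    norm_cast
    lia
  have hcos := Real.injOn_cos (hangle m) (hangle n) (by linarith)
  field_simp at hcos
  norm_cast at hcos
  lia

/-- The minimum of all real `M` such that there are infinitely many totally real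
algebraic integers `t` with `0 ≪ t ≪ M` equals `4`: the set of such `t` is infinite
iff `M ≥ 4`. -/
theorem kronecker_four (M : ℝ) :
    {β : ℝ | IsIntegral ℤ β ∧ ∀ z : ℂ, Polynomial.aeval z (minpoly ℚ β) = 0 →
        ∃ r : ℝ, z = (r : ℂ) ∧ 0 < r ∧ r < M}.Infinite ↔ 4 ≤ M := by
  change (totallyRealIntegers (Ioo 0 M)).Infinite ↔ 4 ≤ M
  constructor
  · intro hinf
    by_contra! hM
    have hsub : Ioo 0 M ⊆ Metric.closedBall ((0 + M) / 2) ((M - 0) / 2) := by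
      rw [Real.Ioo_eq_ball]
      exact Metric.ball_subset_closedBall
    exact hinf ((finite_totallyRealIntegers_closedBall (by linarith)).subset
      (totallyRealIntegers_mono hsub))
  · exact fun hM ↦ infinite_totallyRealIntegers_Ioo_zero_four.mono
      (totallyRealIntegers_mono (Ioo_subset_Ioo_right hM))
end

section
/- Let R be an integral domain of characteristic zero (so ℕ embeds into R via the canonical map). Let k ∈ ℕ and let φ(x; y₁,…,y_k) be a first-order formula in the language of rings {+, ·, 0, 1} with k+1 free variables. Assume: (i) for every tuple ȳ ∈ R^k, the set {x ∈ R : φ(x; ȳ) holds in R} is finite, and (ii) for every n ∈ ℕ there exists ȳ ∈ R^k such that {x ∈ R : φ(x; ȳ) holds in R} equals the image in R of the initial segment {0, 1, …, n} of ℕ. Then the set {x ∈ R : x is the image of some natural number} is first-order definable in R in the language of rings, with parameters from R. -/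
open FirstOrder Language Ring

/-!
Call `S ⊆ R` closed under predecessors if `w ∈ S` implies `w = 0` or `w - 1 ∈ S`. A finite such `S`
contains natural numbers only: for any other `x ∈ S`, the infinitely many elements `x - n` would all
lie in `S`. The sets `{0, …, n}` are closed under predecessors, so `ℕ` is the union of those members
of the family that are closed under predecessors, and this union is definable because closure under
predecessors is a first-order condition on the parameters of the family.
-/

section IsPredClosed

variable {R : Type*} [AddGroupWithOne R]

/-- Closure of `S` under the predecessor map `w ↦ w - 1`, which is required only away from `0`.
It is a first-order property of `S` that forces a finite `S` to consist of natural numbers. -/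
def IsPredClosed (S : Set R) : Prop :=
  ∀ w ∈ S, w = 0 ∨ w - 1 ∈ S

theorem isPredClosed_image_natCast_Iic (n : ℕ) :
    IsPredClosed ((Nat.cast : ℕ → R) '' Set.Iic n) := by
  rintro _ ⟨_ | i, hi, rfl⟩
  · exact Or.inl Nat.cast_zero
  · exact Or.inr ⟨i, (Nat.le_succ i).trans hi, by simp⟩

theorem IsPredClosed.sub_natCast_mem {S : Set R} (hS : IsPredClosed S) {x : R} (hx : x ∈ S)
    (hxℕ : x ∉ Set.range (Nat.cast : ℕ → R)) (n : ℕ) : x - n ∈ S := by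
  induction n with
  | zero => simpa using hx
  | succ n ih =>
    have hne : x - n ≠ 0 := fun h ↦ hxℕ ⟨n, (sub_eq_zero.1 h).symm⟩
    have hmem : x - n - 1 ∈ S := (hS _ ih).resolve_left hne
    rwa [add_comm n 1, Nat.cast_add, Nat.cast_one, sub_add_eq_sub_sub_swap]

theorem IsPredClosed.subset_range_natCast_of_finite [CharZero R] {S : Set R}
    (hS : IsPredClosed S) (hfin : S.Finite) : S ⊆ Set.range (Nat.cast : ℕ → R) := by
  intro x hx
  by_contra hxℕ
  exact Set.infinite_of_injective_forall_mem (sub_right_injective.comp Nat.cast_injective)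
    (hS.sub_natCast_mem hx hxℕ) hfin

theorem setOf_exists_mem_isPredClosed_eq_range_natCast [CharZero R] {ι : Type*} {S : ι → Set R}
    (hfin : ∀ i, (S i).Finite) (hinit : ∀ n : ℕ, ∃ i, S i = Nat.cast '' Set.Iic n) :
    {x | ∃ i, x ∈ S i ∧ IsPredClosed (S i)} = Set.range (Nat.cast : ℕ → R) := by
  ext x
  constructor
  · rintro ⟨i, hx, hi⟩
    exact hi.subset_range_natCast_of_finite (hfin i) hx
  · rintro ⟨n, rfl⟩
    obtain ⟨i, hi⟩ := hinit n
    exact ⟨i, hi ▸ ⟨n, Set.self_mem_Iic, rfl⟩, hi ▸ isPredClosed_image_natCast_Iic n⟩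

end IsPredClosed

section DefinableFamily

variable {L : Language} {M : Type*} [L.Structure M] {A : Set M} {β : Type*}

variable (A L) in
/-- A family of subsets of `M` indexed by tuples of elements of `M` is uniformly definable over `A`
if the relation `x ∈ S c` is. As in `Function.tupleGraph`, the coordinate `none` carries `x` and the
coordinates `some b` carry the parameters `c`. -/
def DefinableFamily (S : (β → M) → Set M) : Prop :=
  A.Definable L {v : Option β → M | v none ∈ S (v ∘ some)}

theorem definableFamily_realize_cons {k : ℕ} (φ : L.Formula (Fin (k + 1))) :
    DefinableFamily L (∅ : Set M) fun c : Fin k → M ↦ {x | φ.Realize (Fin.cons x c)} := by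
  refine Set.empty_definable_iff.2 ⟨φ.relabel (Fin.cons none some), ?_⟩
  ext v
  simp [Fin.comp_cons]

theorem DefinableFamily.definable_apply_mem [Finite β] {S : (β → M) → Set M}
    (hS : DefinableFamily L A S) {γ : Type*} {f : (γ → M) → M} (hf : A.DefinableFun L f)
    (g : β → γ) : A.Definable L {v : γ → M | f v ∈ S (v ∘ g)} := by
  let F (v : γ → M) : Option β → M := fun o ↦ o.elim (f v) (v ∘ g)
  have hF : A.DefinableMap L F
    | none => hf
    | some _ => Set.DefinableFun.proj L
  exact Set.Definable.preimage_map hF hS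

theorem DefinableFamily.definable_setOf_isPredClosed [AddGroupWithOne M] [Finite β]
    {S : (β → M) → Set M} (hS : DefinableFamily L A S) (hzero : A.Definable₁ L {0})
    (hpred : A.DefinableFun L fun v : Fin 1 → M ↦ v 0 - 1) :
    A.Definable L {c | IsPredClosed (S c)} := by
  have hmem : A.Definable L {v : β ⊕ Fin 1 → M | v (.inr 0) ∈ S (v ∘ .inl)} :=
    hS.definable_apply_mem (Set.DefinableFun.proj L) _
  have heq_zero : A.Definable L {v : β ⊕ Fin 1 → M | v (.inr 0) = 0} :=
    hzero.preimage_comp Sum.inr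
  have hpred_inr : A.DefinableFun L fun v : β ⊕ Fin 1 → M ↦ v (.inr 0) - 1 :=
    hpred.comp fun _ ↦ Set.DefinableFun.proj L
  have hpred_mem : A.Definable L {v : β ⊕ Fin 1 → M | v (.inr 0) - 1 ∈ S (v ∘ .inl)} :=
    hS.definable_apply_mem hpred_inr _
  convert (hmem.himp (heq_zero.union hpred_mem)).forall_of_finite using 1
  ext c
  simp [IsPredClosed, Fin.forall_fin_succ_pi, imp_iff_or_not]

theorem DefinableFamily.definable₁_setOf_exists_mem [Finite β] {S : (β → M) → Set M}
    (hS : DefinableFamily L A S) {C : Set (β → M)} (hC : A.Definable L C) :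
    A.Definable₁ L {x | ∃ c, x ∈ S c ∧ c ∈ C} :=
  ((hS.definable_apply_mem (Set.DefinableFun.proj L (i := Sum.inl (0 : Fin 1))) Sum.inr).inter
    (hC.preimage_comp Sum.inr)).exists_of_finite

end DefinableFamily

theorem definable₁_singleton_zero {R : Type*} [NonAssocRing R] [CompatibleRing R] :
    (∅ : Set R).Definable₁ Language.ring {0} :=
  Set.empty_definable_iff.2 ⟨(Term.var 0).equal 0, by ext; simp⟩

theorem definableFun_sub_one {R : Type*} [NonAssocRing R] [CompatibleRing R] :
    (∅ : Set R).DefinableFun Language.ring fun v : Fin 1 → R ↦ v 0 - 1 := by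
  convert (Term.var 0 + -1 : Language.ring.Term (Fin 1)).definableFun_realize (M := R) using 2
  rw [realize_add, realize_neg, realize_one, Term.realize_var, sub_eq_add_neg]

theorem nat_definable_of_uniform_family_general {R : Type*} [AddGroupWithOne R] [CharZero R]
    {L : Language} [L.Structure R] {A : Set R} (hzero : A.Definable₁ L {0})
    (hpred : A.DefinableFun L fun v : Fin 1 → R ↦ v 0 - 1) {β : Type*} [Finite β]
    {S : (β → R) → Set R} (hS : DefinableFamily L A S) (hfin : ∀ c, (S c).Finite)
    (hinit : ∀ n : ℕ, ∃ c, S c = Nat.cast '' Set.Iic n) :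
    A.Definable₁ L (Set.range (Nat.cast : ℕ → R)) := by
  rw [← setOf_exists_mem_isPredClosed_eq_range_natCast hfin hinit]
  exact hS.definable₁_setOf_exists_mem (hS.definable_setOf_isPredClosed hzero hpred)

/-- If a family of subsets of an integral domain `R` of characteristic zero, uniformly
parametrised by a ring-language formula `φ(x; y₁,…,y_k)`, consists of finite sets only
and contains every initial segment `{0,…,n}` of `ℕ` (viewed inside `R`), then the image
of `ℕ` in `R` is first-order definable in `R` with parameters. -/
theorem nat_definable_of_uniform_family (R : Type*) [CommRing R] [IsDomain R] [CharZero R]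
    [CompatibleRing R] (k : ℕ) (φ : Language.ring.Formula (Fin (k + 1)))
    (hfin : ∀ c : Fin k → R, {x : R | φ.Realize (Fin.cons x c)}.Finite)
    (hinit : ∀ n : ℕ, ∃ c : Fin k → R,
      {x : R | φ.Realize (Fin.cons x c)} = (fun i : ℕ => (i : R)) '' {i : ℕ | i ≤ n}) :
    ∃ (m : ℕ) (θ : Language.ring.Formula (Fin (m + 1))) (c : Fin m → R),
      ∀ x : R, (∃ n : ℕ, (n : R) = x) ↔ θ.Realize (Fin.cons x c) := by
  obtain ⟨θ, hθ⟩ := Set.empty_definable_iff.1 (nat_definable_of_uniform_family_general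
    definable₁_singleton_zero definableFun_sub_one (definableFamily_realize_cons φ) hfin hinit)
  exact ⟨0, θ, Fin.elim0, fun x ↦ Set.ext_iff.1 hθ (Fin.cons x Fin.elim0)⟩
end

section
/- Let K be a number field of degree l = [K : ℚ] with ring of integers 𝓞_K, and let f ∈ 𝓞_K be nonzero. Then there are only finitely many a ∈ 𝓞_K such that (a+1) ∣ f, (a+2) ∣ f, …, and (a+l) ∣ f in 𝓞_K. -/
/-!
If `a + v i ∣ f` for `i ∈ s`, then the characteristic polynomial `p` of multiplication by `a` takes
at each `-v i` the value `N(-(a + v i))`, one of the finitely many divisors of `N(f)`. Since `p` is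
monic of degree at most `#s`, these values determine it, so only finitely many `p` occur. Each has
finitely many roots, and `a` is a root of `p`.
-/

open Polynomial

theorem finite_setOf_monic_forall_eval_mem {A ι : Type*} [CommRing A] [IsDomain A]
    {s : Finset ι} {v : ι → A} (hv : Set.InjOn v s) {D : Set A} (hD : D.Finite)
    {n : ℕ} (hn : n ≤ s.card) :
    {p : A[X] | p.Monic ∧ p.natDegree = n ∧ ∀ i ∈ s, p.eval (v i) ∈ D}.Finite := by
  have values_finite : (Set.univ.pi fun _ : s ↦ D).Finite := .pi fun _ ↦ hD
  refine .of_injOn (f := fun (p : A[X]) (i : s) ↦ p.eval (v i)) ?_ ?_ values_finite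
  · rintro p ⟨-, -, eval_mem⟩ i -
    exact eval_mem i i.2
  rintro p ⟨p_monic, p_natDegree, -⟩ q ⟨q_monic, q_natDegree, -⟩ eval_eq
  have p_degree : p.degree = n := by rw [degree_eq_natDegree p_monic.ne_zero, p_natDegree]
  have q_degree : q.degree = n := by rw [degree_eq_natDegree q_monic.ne_zero, q_natDegree]
  refine eq_of_degree_le_of_eval_index_eq s hv ?_ (p_degree.trans q_degree.symm)
    (p_monic.trans q_monic.symm) fun i hi ↦ congrFun eval_eq ⟨i, hi⟩
  rw [p_degree]
  exact_mod_cast hn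

section FreeAlgebra

variable {A R : Type*} [CommRing A] [CommRing R] [Algebra A R] [Module.Finite A R] [Module.Free A R]

theorem eval_charpoly_lmul (a : R) (x : A) :
    (Algebra.lmul A R a).charpoly.eval x = Algebra.norm A (algebraMap A R x - a) := by
  rw [LinearMap.eval_charpoly, Algebra.norm_apply,
    ← (Algebra.lmul A R).commutes, ← map_sub (Algebra.lmul A R)]

theorem finite_setOf_charpoly_lmul_mem [IsDomain R] {P : Set A[X]} (hP : P.Finite) :
    {a : R | (Algebra.lmul A R a).charpoly ∈ P}.Finite := by
  have : IsDomain A := (FaithfulSMul.algebraMap_injective A R).isDomain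
  refine hP.preimage' fun p _ ↦ (p.rootSet_finite R).subset ?_
  rintro a rfl
  exact mem_rootSet.2 ⟨(LinearMap.charpoly_monic _).ne_zero, Algebra.aeval_self_charpoly_lmul a⟩

theorem finitely_many_consecutive_divisors_general [IsDomain R] {f : R}
    (hf : {d : A | d ∣ Algebra.norm A f}.Finite) {ι : Type*} {s : Finset ι} {v : ι → A}
    (hv : Set.InjOn v s) (hs : Module.finrank A R ≤ s.card) :
    {a : R | ∀ i ∈ s, a + algebraMap A R (v i) ∣ f}.Finite := by
  have : IsDomain A := (FaithfulSMul.algebraMap_injective A R).isDomain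
  have charpolys_finite :=
    finite_setOf_monic_forall_eval_mem (neg_injective.comp_injOn hv) hf hs
  refine (finite_setOf_charpoly_lmul_mem (R := R) charpolys_finite).subset fun a ha ↦
    ⟨LinearMap.charpoly_monic _, LinearMap.charpoly_natDegree _, fun i hi ↦ ?_⟩
  have neg_dvd_f : algebraMap A R (-v i) - a ∣ f := by
    rw [map_neg, ← neg_add', neg_dvd, add_comm]
    exact ha i hi
  rw [Function.comp_apply, eval_charpoly_lmul]
  exact map_dvd (Algebra.norm A) neg_dvd_f

end FreeAlgebra

/-- In a number field `K` of degree `l` over `ℚ`, for every nonzero integer `f ∈ 𝓞_K`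
there are only finitely many `a ∈ 𝓞_K` with `(a+1) ∣ f`, `(a+2) ∣ f`, …, `(a+l) ∣ f`. -/
theorem finitely_many_consecutive_divisors (K : Type*) [Field K] [NumberField K]
    (f : NumberField.RingOfIntegers K) (hf : f ≠ 0) :
    {a : NumberField.RingOfIntegers K |
      ∀ i : ℕ, 1 ≤ i → i ≤ Module.finrank ℚ K →
        (a + (i : NumberField.RingOfIntegers K)) ∣ f}.Finite := by
  have norm_divisors_finite : {d : ℤ | d ∣ Algebra.norm ℤ f}.Finite :=
    Set.finite_coe_iff.1 (Fintype.finite (UniqueFactorizationMonoid.fintypeSubtypeDvd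
      (Algebra.norm ℤ f) (Algebra.norm_ne_zero_iff.2 hf)))
  have card_shifts : Module.finrank ℤ (NumberField.RingOfIntegers K) ≤
      (Finset.Icc 1 (Module.finrank ℚ K)).card := by
    rw [NumberField.RingOfIntegers.rank, Nat.card_Icc, Nat.add_sub_cancel]
  refine (finitely_many_consecutive_divisors_general norm_divisors_finite
    (Nat.cast_injective.injOn (f := ((↑) : ℕ → ℤ))) card_shifts).subset fun a ha i hi ↦ ?_
  obtain ⟨one_le, le_finrank⟩ := Finset.mem_Icc.1 hi
  simpa using ha i one_le le_finrank
end

section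
/- (Unsolvability of Hilbert's Tenth Problem) There exists a set S ⊆ ℕ that is diophantine — i.e., there are m ∈ ℕ and a polynomial p ∈ ℤ[T; X₁,…,X_m] with S = {a ∈ ℕ : ∃x ∈ ℕ^m, p(a; x₁,…,x_m) = 0} — but such that membership in S is not a computable (decidable) predicate. -/
/-!
Recursively enumerable sets are diophantine (Matiyasevich, Robinson, Davis, Putnam), so the halting
set, which is recursively enumerable but not computable, is a witness.

Mathlib proves that exponentiation is diophantine. Reading `n.choose k` as a digit of
`(u + 1) ^ n` in a large base `u`, and `n !` as the quotient `r ^ n / r.choose n` for large `r`,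
extends this to binomial coefficients and factorials. A bounded quantifier
`∀ k < y, ∃ t, p (k, t) = 0` is then eliminated by packing the `y` solutions into one simultaneous
solution modulo the product of pairwise coprime moduli `Q ! ^ 2 / (k + 1) + 1`: their prime factors
exceed `Q`, hence also the values of `p`, so that vanishing modulo such a prime is vanishing. That a
packed unknown `a` has all its residues below `u` becomes the divisibility of the falling factorial
`a * (a - 1) * ⋯ * (a - u + 1)`.
With bounded quantifiers, the course of a primitive recursion is described by Gödel's `β` function,
and the graph of every partial recursive function is diophantine by induction on its construction.
-/

namespace HilbertTenth

local infixr:67 " ::ₒ " => Option.elim'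

open Dioph Fin2 Vector3
open scoped Nat

/-! ### Binomial coefficients and factorials through powers -/

theorem ofDigits_map_range (u : ℕ) (c : ℕ → ℕ) (n : ℕ) :
    Nat.ofDigits u ((List.range n).map c) = ∑ i ∈ Finset.range n, c i * u ^ i := by
  induction n with
  | zero => rfl
  | succ n ih =>
    rw [List.range_succ, List.map_append, Nat.ofDigits_append, ih, Finset.sum_range_succ]
    simp [mul_comm]

theorem choose_eq_div_mod {n u : ℕ} (hu : 2 ^ n < u) (k : ℕ) :
    n.choose k = (u + 1) ^ n / u ^ k % u := by
  have two_le : 2 ≤ u := Nat.succ_le_of_lt (Nat.one_le_two_pow.trans_lt hu)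
  let row := (List.range (n + 1)).map n.choose
  have expansion : (u + 1) ^ n = Nat.ofDigits u row := by
    rw [ofDigits_map_range, add_pow]
    simp [mul_comm]
  have digits_eq : Nat.digits u ((u + 1) ^ n) = row := by
    rw [expansion]
    refine Nat.digits_ofDigits u two_le _ (fun d hd => ?_) fun _ => ?_
    · obtain ⟨i, -, rfl⟩ := List.mem_map.1 hd
      exact (Nat.choose_le_two_pow n i).trans_lt hu
    · simp [row]
  rw [← Nat.getD_digits _ _ two_le, digits_eq]
  rcases le_or_gt k n with hk | hk
  · simp [row, Nat.lt_succ_of_le hk]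
  · simp [row, Nat.choose_eq_zero_of_lt hk, hk.not_ge]

theorem pow_succ_le_mul_descFactorial_add (r n : ℕ) :
    r ^ (n + 1) ≤ r * r.descFactorial n + n ^ 2 * r ^ n := by
  induction n with
  | zero => simp
  | succ n ih =>
    have peel : r * r.descFactorial n ≤ r.descFactorial (n + 1) + n * r ^ n :=
      calc r * r.descFactorial n ≤ (r - n + n) * r.descFactorial n := by gcongr; omega
        _ = r.descFactorial (n + 1) + n * r.descFactorial n := by
          rw [add_mul, Nat.descFactorial_succ]
        _ ≤ r.descFactorial (n + 1) + n * r ^ n := by gcongr; exact r.descFactorial_le_pow n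
    calc r ^ (n + 1 + 1) = r * r ^ (n + 1) := pow_succ' _ _
      _ ≤ r * (r * r.descFactorial n + n ^ 2 * r ^ n) := by gcongr
      _ ≤ r * (r.descFactorial (n + 1) + n * r ^ n + n ^ 2 * r ^ n) := by gcongr
      _ = r * r.descFactorial (n + 1) + (n + n ^ 2) * r ^ (n + 1) := by ring
      _ ≤ r * r.descFactorial (n + 1) + (n + 1) ^ 2 * r ^ (n + 1) := by gcongr; nlinarith

theorem factorial_eq_pow_div_choose {n r : ℕ} (hr : (n ! + 1) * n ^ 2 < r) :
    n ! = r ^ n / r.choose n := by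
  have desc : n ! * r.choose n = r.descFactorial n :=
    (Nat.descFactorial_eq_factorial_mul_choose r n).symm
  refine (Nat.div_eq_of_lt_le (desc.trans_le (r.descFactorial_le_pow n)) ?_).symm
  have pow_pos : 0 < r ^ n := Nat.pow_pos (Nat.zero_lt_of_lt hr)
  have error_lt : (n ! + 1) * n ^ 2 * r ^ n < r * r ^ n := Nat.mul_lt_mul_of_pos_right hr pow_pos
  have pow_le : (n ! + 1) * (r * r ^ n) ≤ (n ! + 1) * (r * r.descFactorial n + n ^ 2 * r ^ n) := by
    rw [← pow_succ']
    exact Nat.mul_le_mul_left _ (pow_succ_le_mul_descFactorial_add r n)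
  have scaled : r * (n ! * r ^ n) < r * ((n ! + 1) * r.descFactorial n) := by linarith
  calc r ^ n < (n ! + 1) * r.choose n := by
        refine Nat.lt_of_mul_lt_mul_left (a := r * n !) ?_
        calc r * n ! * r ^ n = r * (n ! * r ^ n) := mul_assoc _ _ _
          _ < r * ((n ! + 1) * r.descFactorial n) := scaled
          _ = r * n ! * ((n ! + 1) * r.choose n) := by rw [← desc]; ring

/-! ### A diophantine family of coprime moduli -/

/-- The `k`-th modulus, for `k < Q`, of the Chinese remainder encoding of bounded quantifiers.
Unlike Gödel's `1 + (k + 1) * Q !`, it divides `Q ! ^ 2 + (k + 1)`, so that the product over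
`k < y` is a binomial coefficient. -/
def crtModulus (Q k : ℕ) : ℕ := Q ! ^ 2 / (k + 1) + 1

/-- The product of the moduli `crtModulus Q k` for `k < y`, in closed form; see
`prod_crtModulus`. -/
def crtProduct (Q y : ℕ) : ℕ := (Q ! ^ 2 + y).choose y

/-- A common solution of the congruences `x ≡ k [MOD crtModulus Q k]` for `k < y`: a natural number
congruent to `-(Q ! ^ 2 + 1)` modulo `crtProduct Q y`. -/
def crtIndex (Q y : ℕ) : ℕ := (crtProduct Q y - 1) * (Q ! ^ 2 + 1)

section Moduli

variable {Q y k : ℕ}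

theorem crtModulus_mul_succ (hk : k < Q) : crtModulus Q k * (k + 1) = Q ! ^ 2 + (k + 1) := by
  have dvd : k + 1 ∣ Q ! ^ 2 := (Nat.dvd_factorial k.succ_pos hk).trans (dvd_pow_self _ two_ne_zero)
  rw [crtModulus, add_mul, Nat.div_mul_cancel dvd, one_mul]

theorem prod_crtModulus (hy : y ≤ Q) :
    ∏ k ∈ Finset.range y, crtModulus Q k = crtProduct Q y := by
  induction y with
  | zero => simp [crtProduct]
  | succ y ih =>
    refine Nat.eq_of_mul_eq_mul_right y.succ_pos ?_
    rw [Finset.prod_range_succ, ih (Nat.le_of_succ_le hy), mul_assoc, crtModulus_mul_succ hy,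
      ← add_assoc, mul_comm, crtProduct, Nat.add_one_mul_choose_eq, crtProduct, add_assoc]

theorem coprime_factorial_crtModulus (hk : k < Q) : Nat.Coprime Q ! (crtModulus Q k) := by
  have dvd : k + 1 ∣ Q ! := Nat.dvd_factorial k.succ_pos hk
  rw [crtModulus, pow_two, Nat.mul_div_assoc _ dvd]
  simp

theorem coprime_crtModulus {j : ℕ} (hjk : j < k) (hk : k < Q) :
    Nat.Coprime (crtModulus Q j) (crtModulus Q k) := by
  set d := (crtModulus Q j).gcd (crtModulus Q k)
  have dvd_k : d ∣ Q ! ^ 2 + (k + 1) :=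
    crtModulus_mul_succ hk ▸ (Nat.gcd_dvd_right _ _).mul_right _
  have dvd_j : d ∣ Q ! ^ 2 + (j + 1) :=
    crtModulus_mul_succ (hjk.trans hk) ▸ (Nat.gcd_dvd_left _ _).mul_right _
  have dvd_sub : d ∣ k - j := by
    simpa only [Nat.add_sub_add_left, Nat.add_sub_add_right] using Nat.dvd_sub dvd_k dvd_j
  have dvd_factorial : d ∣ Q ! := dvd_sub.trans (Nat.dvd_factorial (by omega) (by omega))
  exact Nat.eq_one_of_dvd_coprimes (coprime_factorial_crtModulus hk) dvd_factorial
    (Nat.gcd_dvd_right _ _)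

theorem pairwise_coprime_crtModulus (hy : y ≤ Q) :
    (Finset.range y : Set ℕ).Pairwise (Function.onFun Nat.Coprime (crtModulus Q)) := by
  intro j hj k hk hjk
  simp only [Finset.coe_range, Set.mem_Iio] at hj hk
  rcases hjk.lt_or_gt with h | h
  · exact coprime_crtModulus h (hk.trans_le hy)
  · exact (coprime_crtModulus h (hj.trans_le hy)).symm

theorem crtProduct_dvd_iff (hy : y ≤ Q) {z : ℕ} :
    crtProduct Q y ∣ z ↔ ∀ k < y, crtModulus Q k ∣ z := by
  rw [← prod_crtModulus hy]
  refine ⟨fun h k hk => (Finset.dvd_prod_of_mem _ (Finset.mem_range.2 hk)).trans h, fun h => ?_⟩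
  exact Finset.prod_dvd_of_isRelPrime
    (fun j hj k hk hjk => Nat.coprime_iff_isRelPrime.1 (pairwise_coprime_crtModulus hy hj hk hjk))
    fun k hk => h k (Finset.mem_range.1 hk)

theorem crtIndex_modEq (hy : y ≤ Q) (hk : k < y) : crtIndex Q y ≡ k [MOD crtModulus Q k] := by
  have product_pos : 0 < crtProduct Q y := Nat.choose_pos (Nat.le_add_left _ _)
  have index_add : crtIndex Q y + (Q ! ^ 2 + 1) = crtProduct Q y * (Q ! ^ 2 + 1) := by
    rw [crtIndex, ← Nat.succ_mul, Nat.succ_eq_add_one, Nat.sub_add_cancel product_pos]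
  have dvd_index : crtModulus Q k ∣ crtIndex Q y + (Q ! ^ 2 + 1) :=
    index_add ▸ ((crtProduct_dvd_iff hy).1 dvd_rfl k hk).mul_right _
  have dvd_k : crtModulus Q k ∣ k + (Q ! ^ 2 + 1) :=
    ⟨k + 1, by rw [crtModulus_mul_succ (hk.trans_le hy)]; ring⟩
  exact Nat.ModEq.add_right_cancel' _
    ((Nat.modEq_zero_iff_dvd.2 dvd_index).trans (Nat.modEq_zero_iff_dvd.2 dvd_k).symm)

theorem exists_prime_dvd_crtModulus (hk : k < Q) : ∃ q, q.Prime ∧ Q < q ∧ q ∣ crtModulus Q k := by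
  have ne_one : crtModulus Q k ≠ 1 := by
    intro h
    have mul_succ := crtModulus_mul_succ hk
    have factorial_sq_pos : 0 < Q ! ^ 2 := pow_pos Q.factorial_pos 2
    rw [h] at mul_succ
    omega
  obtain ⟨q, prime_q, q_dvd⟩ := Nat.exists_prime_and_dvd ne_one
  refine ⟨q, prime_q, ?_, q_dvd⟩
  by_contra! q_le
  exact prime_q.ne_one (Nat.eq_one_of_dvd_coprimes (coprime_factorial_crtModulus hk)
    (Nat.dvd_factorial prime_q.pos q_le) q_dvd)

end Moduli

theorem dvd_descFactorial_of_modEq {m a j u : ℕ} (h : a ≡ j [MOD m]) (hj : j < u) :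
    m ∣ a.descFactorial u := by
  rcases le_or_gt j a with hja | haj
  · rw [Nat.descFactorial_eq_prod_range]
    exact ((Nat.modEq_iff_dvd' hja).1 h.symm).trans
      (Finset.dvd_prod_of_mem _ (Finset.mem_range.2 hj))
  · rw [Nat.descFactorial_of_lt (haj.trans hj)]
    exact dvd_zero m

theorem exists_lt_modEq_of_dvd_descFactorial {q a u : ℕ} (hq : q.Prime)
    (h : q ∣ a.descFactorial u) : ∃ j < u, a ≡ j [MOD q] := by
  rcases lt_or_ge a u with hau | hua
  · exact ⟨a, hau, rfl⟩
  · rw [Nat.descFactorial_eq_prod_range, hq.prime.dvd_finsetProd_iff] at h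
    obtain ⟨j, hj, dvd_sub⟩ := h
    have hju := Finset.mem_range.1 hj
    exact ⟨j, hju, ((Nat.modEq_iff_dvd' (hju.le.trans hua)).2 dvd_sub).symm⟩

/-! ### Integer polynomials -/

section Poly

variable {α : Type*}

theorem poly_modEq (p : Poly α) {m : ℕ} {x y : α → ℕ} (h : ∀ i, x i ≡ y i [MOD m]) :
    p x ≡ p y [ZMOD m] := by
  induction p using Poly.induction with
  | H1 i => exact Int.natCast_modEq_iff.2 (h i)
  | H2 n => exact Int.ModEq.refl n
  | H3 f g hf hg => exact hf.sub hg
  | H4 f g hf hg => exact hf.mul hg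

theorem exists_mvPolynomial_eval_eq (p : Poly α) :
    ∃ P : MvPolynomial α ℤ, ∀ x : α → ℕ, MvPolynomial.eval (fun i => (x i : ℤ)) P = p x := by
  induction p using Poly.induction with
  | H1 i => exact ⟨MvPolynomial.X i, fun x => by simp⟩
  | H2 n => exact ⟨MvPolynomial.C n, fun x => by simp⟩
  | H3 f g hf hg =>
    obtain ⟨P, hP⟩ := hf
    obtain ⟨R, hR⟩ := hg
    exact ⟨P - R, fun x => by simp [hP, hR]⟩
  | H4 f g hf hg =>
    obtain ⟨P, hP⟩ := hf
    obtain ⟨R, hR⟩ := hg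
    exact ⟨P * R, fun x => by simp [hP, hR]⟩

theorem exists_finset_dependsOn (p : Poly α) : ∃ s : Finset α, DependsOn p (s : Set α) := by
  obtain ⟨P, hP⟩ := exists_mvPolynomial_eval_eq p
  refine ⟨P.vars, fun x y h => ?_⟩
  rw [← hP, ← hP]
  exact MvPolynomial.eval₂Hom_congr' rfl (fun i hi _ => congrArg Nat.cast (h i hi)) rfl

theorem exists_poly_fin_dummies {S : Set (α → ℕ)} (d : Dioph S) :
    ∃ (n : ℕ) (p : Poly (α ⊕ Fin n)), ∀ v, v ∈ S ↔ ∃ t, p (Sum.elim v t) = 0 := by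
  classical
  obtain ⟨β, p, hp⟩ := d
  obtain ⟨s, hs⟩ := exists_finset_dependsOn p
  let e := Fintype.equivFin (Option s.toRight)
  -- Dummies on which `p` does not depend are all identified with the extra variable `e none`.
  let collapse (b : β) := if h : b ∈ s.toRight then e (some ⟨b, h⟩) else e none
  refine ⟨_, p.map (Sum.map id collapse), fun v => (hp v).trans ⟨?_, ?_⟩⟩
  · rintro ⟨t, ht⟩
    refine ⟨fun j => (0 ::ₒ fun b : s.toRight => t b) (e.symm j), ?_⟩
    rw [Poly.map_apply, Sum.elim_comp_map, ← ht]
    refine hs fun i hi => ?_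
    rcases i with a | b
    · rfl
    · have mem : b ∈ s.toRight := Finset.mem_toRight.2 hi
      simp only [collapse, dif_pos mem, Sum.elim_inr, Function.comp_apply, e.symm_apply_apply,
        Option.elim'_some]
  · rintro ⟨t, ht⟩
    refine ⟨t ∘ collapse, ?_⟩
    simpa only [Poly.map_apply, Sum.elim_comp_map, Function.comp_id] using ht

theorem exists_poly_option_fin_dummies {S : Set (Option α → ℕ)} (d : Dioph S) :
    ∃ (n : ℕ) (p : Poly (Option (α ⊕ Fin n))),
      ∀ k v, k ::ₒ v ∈ S ↔ ∃ t, p (k ::ₒ Sum.elim v t) = 0 := by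
  obtain ⟨n, p, hp⟩ := exists_poly_fin_dummies d
  refine ⟨n, p.map (Sum.elim (Option.map Sum.inl) (some ∘ Sum.inr)), fun k v => ?_⟩
  refine (hp _).trans (exists_congr fun t => ?_)
  rw [Poly.map_apply]
  congr! 2
  ext ((_ | i) | i) <;> rfl

theorem exists_monotone_dioph_bound {α : Type} (p : Poly α) :
    ∃ B : (α → ℕ) → ℕ, DiophFn B ∧ Monotone B ∧ ∀ x, (p x).natAbs ≤ B x := by
  induction p using Poly.induction with
  | H1 i => exact ⟨fun x => x i, proj_dioph i, fun x y h => h i, fun x => by simp⟩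
  | H2 n => exact ⟨fun _ => n.natAbs, const_dioph _, monotone_const, fun x => le_rfl⟩
  | H3 f g hf hg =>
    obtain ⟨B, dB, monoB, hB⟩ := hf
    obtain ⟨C, dC, monoC, hC⟩ := hg
    exact ⟨fun x => B x + C x, dB D+ dC, monoB.add monoC,
      fun x => (Int.natAbs_sub_le _ _).trans (add_le_add (hB x) (hC x))⟩
  | H4 f g hf hg =>
    obtain ⟨B, dB, monoB, hB⟩ := hf
    obtain ⟨C, dC, monoC, hC⟩ := hg
    exact ⟨fun x => B x * C x, dB D* dC, monoB.mul' monoC,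
      fun x => (Int.natAbs_mul _ _).trans_le (Nat.mul_le_mul (hB x) (hC x))⟩

end Poly

/-! ### Closure properties of diophantine sets and functions -/

section Closure

variable {α : Type} {f g : (α → ℕ) → ℕ}

theorem forall_dioph {ι : Type*} [Finite ι] {S : ι → Set (α → ℕ)} (d : ∀ i, Dioph (S i)) :
    Dioph {v | ∀ i, v ∈ S i} := by
  have := Fintype.ofFinite ι
  refine (DiophList.forall ((Finset.univ : Finset ι).toList.map S) ?_).ext fun v => ?_
  · simpa [List.forall_iff_forall_mem] using d
  · simp [List.forall_iff_forall_mem]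

theorem diophFn_elim_comp {β : Type} {F : (Option α → ℕ) → ℕ} (dF : DiophFn F)
    {g : (β → ℕ) → ℕ} (dg : DiophFn g) (ρ : α → β) : DiophFn fun w => F (g w ::ₒ w ∘ ρ) := by
  have graph : Dioph {x : Option (Option β) → ℕ |
      F (x none ::ₒ fun i => x (some (some (ρ i)))) = x (some none)} := by
    convert eq_dioph (reindex_diophFn (Option.map (some ∘ ρ)) dF) (proj_dioph (some none))
      using 5 with x
    funext i
    cases i <;> rfl
  exact diophFn_comp1 graph (reindex_diophFn some dg)

theorem ite_dioph {p : (α → ℕ) → Prop} [DecidablePred p] (dp : Dioph {v | p v})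
    (dnp : Dioph {v | ¬ p v}) (df : DiophFn f) (dg : DiophFn g) :
    DiophFn fun v => if p v then f v else g v := by
  have graph := ((reindex_dioph _ some dp).inter df).union ((reindex_dioph _ some dnp).inter dg)
  refine graph.ext fun w => ?_
  change (p (w ∘ some) ∧ f (w ∘ some) = w none) ∨ (¬ p (w ∘ some) ∧ g (w ∘ some) = w none) ↔
    (if p (w ∘ some) then f (w ∘ some) else g (w ∘ some)) = w none
  split_ifs with h <;> simp [h]

theorem pair_dioph (df : DiophFn f) (dg : DiophFn g) : DiophFn fun v => Nat.pair (f v) (g v) := by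
  refine ite_dioph (df D< dg) ?_ (dg D* dg D+ df) (df D* df D+ df D+ dg)
  simpa only [not_lt] using dg D≤ df

theorem diophFn_of_graph {h : ℕ → ℕ} (d : Dioph {v : Vector3 ℕ 2 | h (v &1) = v &0})
    (df : DiophFn f) : DiophFn fun v => h (f v) :=
  diophFn_comp (f := fun v : Vector3 ℕ 1 => h (v &0)) ((diophFn_vec _).2 d) [f] df

theorem unpair_fst_dioph (df : DiophFn f) : DiophFn fun v => (f v).unpair.1 := by
  refine diophFn_of_graph (h := fun n => n.unpair.1)
    (((D∃) 2 <| pair_dioph (D&1) (D&0) D= D&2).ext fun v => ?_) df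
  change (∃ b, Nat.pair (v &0) b = v &1) ↔ (v &1).unpair.1 = v &0
  exact ⟨fun ⟨b, h⟩ => by rw [← h, Nat.unpair_pair], fun h => ⟨_, h ▸ Nat.pair_unpair _⟩⟩

theorem unpair_snd_dioph (df : DiophFn f) : DiophFn fun v => (f v).unpair.2 := by
  refine diophFn_of_graph (h := fun n => n.unpair.2)
    (((D∃) 2 <| pair_dioph (D&0) (D&1) D= D&2).ext fun v => ?_) df
  change (∃ a, Nat.pair a (v &0) = v &1) ↔ (v &1).unpair.2 = v &0
  exact ⟨fun ⟨a, h⟩ => by rw [← h, Nat.unpair_pair], fun h => ⟨_, h ▸ Nat.pair_unpair _⟩⟩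

theorem beta_dioph (df : DiophFn f) (dg : DiophFn g) : DiophFn fun v => Nat.beta (f v) (g v) :=
  unpair_fst_dioph df D% ((dg D+ D.1) D* unpair_snd_dioph df D+ D.1)

theorem choose_dioph (df : DiophFn f) (dg : DiophFn g) :
    DiophFn fun v => (f v).choose (g v) := by
  have du : DiophFn fun v => 2 ^ f v + 1 := pow_dioph (D.2) df D+ D.1
  simpa only [Function.const_apply, ← choose_eq_div_mod (lt_add_one _)]
    using pow_dioph (du D+ D.1) df D/ pow_dioph du dg D% du

theorem factorial_dioph (df : DiophFn f) : DiophFn fun v => (f v)! := by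
  have dr : DiophFn fun v => (f v ^ f v + 1) * f v ^ 2 + 1 :=
    (pow_dioph df df D+ D.1) D* pow_dioph df (D.2) D+ D.1
  have lt_base (n : ℕ) : (n ! + 1) * n ^ 2 < (n ^ n + 1) * n ^ 2 + 1 := by
    rw [Nat.lt_add_one_iff]
    gcongr
    exact n.factorial_le_pow
  simpa only [← factorial_eq_pow_div_choose (lt_base _)] using pow_dioph dr df D/ choose_dioph dr df

theorem descFactorial_dioph (df : DiophFn f) (dg : DiophFn g) :
    DiophFn fun v => (f v).descFactorial (g v) := by
  simpa only [Nat.descFactorial_eq_factorial_mul_choose]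
    using factorial_dioph dg D* choose_dioph df dg

theorem crtProduct_dioph (df : DiophFn f) (dg : DiophFn g) :
    DiophFn fun v => crtProduct (f v) (g v) :=
  choose_dioph (pow_dioph (factorial_dioph df) (D.2) D+ dg) dg

theorem crtIndex_dioph (df : DiophFn f) (dg : DiophFn g) :
    DiophFn fun v => crtIndex (f v) (g v) :=
  (crtProduct_dioph df dg D- D.1) D* (pow_dioph (factorial_dioph df) (D.2) D+ D.1)

end Closure

/-! ### Elimination of bounded quantifiers -/

section BoundedQuantifier

variable {α β : Type*} {p : Poly (Option (α ⊕ β))} {v : α → ℕ}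

theorem exists_descFactorial_dvd_of_forall_lt {Q y u : ℕ} (hy : y ≤ Q)
    {t : ℕ → β → ℕ} (ht : ∀ k < y, ∀ i, t k i < u)
    (hp : ∀ k < y, p (k ::ₒ Sum.elim v (t k)) = 0) :
    ∃ a : β → ℕ, (∀ i, crtProduct Q y ∣ (a i).descFactorial u) ∧
      crtProduct Q y ∣ (p (crtIndex Q y ::ₒ Sum.elim v a)).natAbs := by
  have residues (i : β) : ∃ a, ∀ k < y, a ≡ t k i [MOD crtModulus Q k] := by
    obtain ⟨a, ha⟩ := Nat.chineseRemainderOfFinset (fun k => t k i) (crtModulus Q)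
      (Finset.range y) (fun k _ => Nat.succ_ne_zero _) (pairwise_coprime_crtModulus hy)
    exact ⟨a, fun k hk => ha k (Finset.mem_range.2 hk)⟩
  choose a ha using residues
  refine ⟨a, fun i => (crtProduct_dvd_iff hy).2 fun k hk =>
    dvd_descFactorial_of_modEq (ha i k hk) (ht k hk i), (crtProduct_dvd_iff hy).2 fun k hk => ?_⟩
  have point_modEq (j) : (crtIndex Q y ::ₒ Sum.elim v a) j ≡
      (k ::ₒ Sum.elim v (t k)) j [MOD crtModulus Q k] := by
    rcases j with _ | i | i
    exacts [crtIndex_modEq hy hk, rfl, ha i k hk]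
  rw [← Int.natCast_dvd, ← Int.modEq_zero_iff_dvd, ← hp k hk]
  exact poly_modEq p point_modEq

theorem exists_eq_zero_of_crtProduct_dvd {Q y u k : ℕ} (hy : y ≤ Q) (hk : k < y)
    (hQ : ∀ t : β → ℕ, (∀ i, t i < u) → (p (k ::ₒ Sum.elim v t)).natAbs ≤ Q)
    {a : β → ℕ} (ha : ∀ i, crtProduct Q y ∣ (a i).descFactorial u)
    (hp : crtProduct Q y ∣ (p (crtIndex Q y ::ₒ Sum.elim v a)).natAbs) :
    ∃ t, p (k ::ₒ Sum.elim v t) = 0 := by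
  obtain ⟨q, prime_q, Q_lt_q, q_dvd⟩ := exists_prime_dvd_crtModulus (hk.trans_le hy)
  have dvd_of_product_dvd {z : ℕ} (hz : crtProduct Q y ∣ z) : q ∣ z :=
    q_dvd.trans ((crtProduct_dvd_iff hy).1 hz k hk)
  choose t ht a_modEq using fun i =>
    exists_lt_modEq_of_dvd_descFactorial prime_q (dvd_of_product_dvd (ha i))
  have point_modEq (j) : (crtIndex Q y ::ₒ Sum.elim v a) j ≡
      (k ::ₒ Sum.elim v t) j [MOD q] := by
    rcases j with _ | i | i
    exacts [(crtIndex_modEq hy hk).of_dvd q_dvd, rfl, a_modEq i]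
  have q_dvd_value : q ∣ (p (k ::ₒ Sum.elim v t)).natAbs :=
    Int.natCast_dvd.1 ((poly_modEq p point_modEq).dvd_iff.1
      (Int.natCast_dvd.2 (dvd_of_product_dvd hp)))
  exact ⟨t, Int.natAbs_eq_zero.1
    (Nat.eq_zero_of_dvd_of_lt q_dvd_value ((hQ t ht).trans_lt Q_lt_q))⟩

theorem forall_lt_exists_eq_zero_iff [Finite β] {y : ℕ} {Q : ℕ → ℕ} (hy : ∀ u, y ≤ Q u)
    (hQ : ∀ u, ∀ k < y, ∀ t : β → ℕ, (∀ i, t i < u) → (p (k ::ₒ Sum.elim v t)).natAbs ≤ Q u) :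
    (∀ k < y, ∃ t, p (k ::ₒ Sum.elim v t) = 0) ↔
      ∃ u, ∃ a : β → ℕ, (∀ i, crtProduct (Q u) y ∣ (a i).descFactorial u) ∧
        crtProduct (Q u) y ∣ (p (crtIndex (Q u) y ::ₒ Sum.elim v a)).natAbs := by
  constructor
  · intro h
    choose! t ht using h
    obtain ⟨u, hu⟩ : ∃ u, ∀ k < y, ∀ i, t k i < u := by
      obtain ⟨b, hb⟩ := (Set.finite_range fun ki : Fin y × β => t ki.1 ki.2).bddAbove
      exact ⟨b + 1, fun k hk i => Nat.lt_succ_of_le (hb ⟨(⟨k, hk⟩, i), rfl⟩)⟩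
    exact ⟨u, exists_descFactorial_dvd_of_forall_lt (hy u) hu ht⟩
  · rintro ⟨u, a, ha, hp⟩ k hk
    exact exists_eq_zero_of_crtProduct_dvd (hy u) hk (hQ u k hk) ha hp

end BoundedQuantifier

section BoundedQuantifierDioph

variable {α : Type}

theorem exists_dioph_bound_of_lt {β : Type} (p : Poly (Option (α ⊕ β))) {f : (α → ℕ) → ℕ}
    (df : DiophFn f) :
    ∃ Q : (Option α → ℕ) → ℕ, DiophFn Q ∧ ∀ v u, f v ≤ Q (u ::ₒ v) ∧
      ∀ k < f v, ∀ t, (∀ i, t i < u) → (p (k ::ₒ Sum.elim v t)).natAbs ≤ Q (u ::ₒ v) := by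
  obtain ⟨B, dB, monoB, hB⟩ := exists_monotone_dioph_bound p
  have df_some : DiophFn fun w : Option α → ℕ => f (w ∘ some) := reindex_diophFn some df
  refine ⟨fun w => f (w ∘ some) + B (f (w ∘ some) ::ₒ w ∘ Sum.elim some fun _ => none),
    df_some D+ diophFn_elim_comp dB df_some _,
    fun v u => ⟨Nat.le_add_right _ _, fun k hk t ht => ?_⟩⟩
  refine (hB _).trans ((monoB ?_).trans (Nat.le_add_left _ _))
  rintro (_ | i | i)
  exacts [hk.le, le_rfl, (ht i).le]

theorem crtProduct_dvd_dioph {β : Type} [Finite β] (p : Poly (Option (α ⊕ β)))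
    {Q y : (Option α ⊕ β → ℕ) → ℕ} (dQ : DiophFn Q) (dy : DiophFn y) :
    Dioph {w | (∀ i, crtProduct (Q w) (y w) ∣ (w (Sum.inr i)).descFactorial (w (Sum.inl none))) ∧
      crtProduct (Q w) (y w) ∣ (p (crtIndex (Q w) (y w) ::ₒ w ∘ Sum.map some id)).natAbs} := by
  have dprod := crtProduct_dioph dQ dy
  exact (forall_dioph fun i : β =>
      dprod D∣ descFactorial_dioph (proj_dioph (Sum.inr i)) (proj_dioph (Sum.inl none))) D∧
    (dprod D∣ diophFn_elim_comp (abs_poly_dioph p) (crtIndex_dioph dQ dy) _)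

theorem ball_dioph {S : Set (Option α → ℕ)} (d : Dioph S) {f : (α → ℕ) → ℕ} (df : DiophFn f) :
    Dioph {v : α → ℕ | ∀ k < f v, k ::ₒ v ∈ S} := by
  obtain ⟨n, p, hp⟩ := exists_poly_option_fin_dummies d
  obtain ⟨Q, dQ, hQ⟩ := exists_dioph_bound_of_lt p df
  have matrix := crtProduct_dvd_dioph p (reindex_diophFn Sum.inl dQ)
    (reindex_diophFn (Sum.inl ∘ some) df)
  refine (ex1_dioph (ex_dioph matrix)).ext fun v => ?_
  simp only [hp]
  refine Iff.trans (exists_congr fun u => exists_congr fun a => ?_)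
    (forall_lt_exists_eq_zero_iff (fun u => (hQ v u).1) fun u => (hQ v u).2).symm
  change _ ∧ _ ∣ (p (_ ::ₒ Sum.elim (u ::ₒ v) a ∘ Sum.map some id)).natAbs ↔ _
  rw [Sum.elim_comp_map]
  rfl

theorem vec_ball_dioph (n : ℕ) {S : Set (Vector3 ℕ (n + 1))} (d : Dioph S)
    {f : Vector3 ℕ n → ℕ} (df : DiophFn f) :
    Dioph {v : Vector3 ℕ n | ∀ k < f v, (k :: v) ∈ S} := by
  refine (ball_dioph (reindex_dioph _ (none :: some) d) df).ext fun v =>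
    forall₂_congr fun k _ => ?_
  have cons_eq : (k ::ₒ v) ∘ cons none some = k :: v := by
    funext i
    cases i <;> rfl
  exact cons_eq ▸ Iff.rfl

end BoundedQuantifierDioph

/-! ### Partial recursive functions have diophantine graphs -/

theorem mem_rec_bind_iff {α : Type*} {x : Part α} {g : ℕ → α → Part α} {n : ℕ} {z : α} :
    z ∈ (Nat.rec x (fun k prev => prev.bind (g k)) n : Part α) ↔
      ∃ s : ℕ → α, s 0 ∈ x ∧ (∀ k < n, s (k + 1) ∈ g k (s k)) ∧ s n = z := by
  induction n generalizing z with
  | zero => exact ⟨fun h => ⟨fun _ => z, h, by simp, rfl⟩, fun ⟨_, h, _, hz⟩ => hz ▸ h⟩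
  | succ n ih =>
    refine Part.mem_bind_iff.trans ⟨?_, ?_⟩
    · rintro ⟨a, ha, hz⟩
      obtain ⟨s, start, step, rfl⟩ := ih.1 ha
      refine ⟨fun k => if k ≤ n then s k else z, by simpa using start, fun k hk => ?_, by simp⟩
      rcases Nat.lt_succ_iff_lt_or_eq.1 hk with hk | rfl
      · simpa [hk, hk.le] using step k hk
      · simpa using hz
    · rintro ⟨s, start, step, rfl⟩
      exact ⟨s n, ih.2 ⟨s, start, fun k hk => step k (hk.trans n.lt_succ_self), rfl⟩,
        step n n.lt_succ_self⟩

theorem exists_beta_eq (s : ℕ → ℕ) (n : ℕ) : ∃ b, ∀ i ≤ n, Nat.beta b i = s i := by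
  refine ⟨Nat.unbeta ((List.range (n + 1)).map s), fun i hi => ?_⟩
  simpa using Nat.beta_unbeta_coe ((List.range (n + 1)).map s) ⟨i, by simp; omega⟩

/-- A partial function `f : ℕ →. ℕ` is diophantine if its graph is; the vector `v` lists the
argument of `f` followed by its value. -/
def DiophPart (f : ℕ →. ℕ) : Prop :=
  Dioph {v : Vector3 ℕ 2 | v &1 ∈ f (v &0)}

namespace DiophPart

variable {f g : ℕ →. ℕ}

theorem mem {α : Type} (hf : DiophPart f) {x y : (α → ℕ) → ℕ} (dx : DiophFn x) (dy : DiophFn y) :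
    Dioph {v | y v ∈ f (x v)} :=
  dioph_comp2 (S := fun a b => b ∈ f a) dx dy hf

theorem of_diophFn {h : ℕ → ℕ} (d : DiophFn fun v : Vector3 ℕ 2 => h (v &0)) :
    DiophPart fun n => Part.some (h n) :=
  (D&1 D= d).ext fun _ => Part.mem_some_iff.symm

theorem pair (hf : DiophPart f) (hg : DiophPart g) :
    DiophPart fun n => Nat.pair <$> f n <*> g n := by
  refine ((hf.mem (D&0) (unpair_fst_dioph (D&1))) D∧
    (hg.mem (D&0) (unpair_snd_dioph (D&1)))).ext fun v => ?_
  change (v &1).unpair.1 ∈ f (v &0) ∧ (v &1).unpair.2 ∈ g (v &0) ↔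
    v &1 ∈ (Nat.pair <$> f (v &0) <*> g (v &0))
  simp only [Seq.seq, Part.map_eq_map, Part.bind_map, Part.mem_bind_iff, Part.mem_map_iff]
  constructor
  · rintro ⟨hx, hy⟩
    exact ⟨_, hx, _, hy, Nat.pair_unpair _⟩
  · rintro ⟨x, hx, y, hy, eq⟩
    rw [← eq, Nat.unpair_pair]
    exact ⟨hx, hy⟩

theorem comp (hf : DiophPart f) (hg : DiophPart g) : DiophPart fun n => g n >>= f :=
  ((D∃) 2 <| (hg.mem (D&1) (D&0)) D∧ hf.mem (D&0) (D&2)).ext fun v =>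
    (Part.mem_bind_iff (f := g (v &0))).symm

theorem prec (hf : DiophPart f) (hg : DiophPart g) :
    DiophPart (Nat.unpaired fun a n =>
      n.rec (f a) fun i prev => do let b ← prev; g (Nat.pair a (Nat.pair i b))) := by
  have dn : DiophFn fun v : Vector3 ℕ 3 => (v &1).unpair.2 := unpair_snd_dioph (D&1)
  have dstep : Dioph {v : Vector3 ℕ 4 | Nat.beta (v &1) (v &0 + 1) ∈
      g (Nat.pair (v &2).unpair.1 (Nat.pair (v &0) (Nat.beta (v &1) (v &0))))} :=
    hg.mem (pair_dioph (unpair_fst_dioph (D&2)) (pair_dioph (D&0) (beta_dioph (D&1) (D&0))))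
      (beta_dioph (D&1) (D&0 D+ D.1))
  refine ((D∃) 2 <| (hf.mem (unpair_fst_dioph (D&1)) (beta_dioph (D&0) (D.0))) D∧
    (vec_ball_dioph 3 dstep dn D∧ (beta_dioph (D&0) dn D= D&2))).ext fun v => ?_
  refine Iff.trans ?_ mem_rec_bind_iff.symm
  constructor
  · rintro ⟨b, start, step, value⟩
    exact ⟨Nat.beta b, start, step, value⟩
  · rintro ⟨s, start, step, value⟩
    obtain ⟨b, hb⟩ := exists_beta_eq s (v &0).unpair.2
    refine ⟨b, ?_, fun i hi => ?_, (hb _ le_rfl).trans value⟩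
    · change Nat.beta b 0 ∈ f (v &0).unpair.1
      rwa [hb 0 (Nat.zero_le _)]
    · change Nat.beta b (i + 1) ∈ g (Nat.pair (v &0).unpair.1 (Nat.pair i (Nat.beta b i)))
      rw [hb (i + 1) hi, hb i (Nat.le_of_lt hi)]
      exact step i hi

theorem rfind (hf : DiophPart f) :
    DiophPart fun a => Nat.rfind fun n => (fun m => m = 0) <$> f (Nat.pair a n) := by
  have dpos : Dioph {v : Vector3 ℕ 3 | ∃ m, m ∈ f (Nat.pair (v &1) (v &0)) ∧ m ≠ 0} :=
    (D∃) 3 <| (hf.mem (pair_dioph (D&2) (D&1)) (D&0)) D∧ (D&0 D≠ D.0)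
  refine ((hf.mem (pair_dioph (D&0) (D&1)) (D.0)) D∧
    vec_ball_dioph 2 dpos (D&1)).ext fun v => ?_
  change 0 ∈ f (Nat.pair (v &0) (v &1)) ∧
    (∀ n < v &1, ∃ m, m ∈ f (Nat.pair (v &0) n) ∧ m ≠ 0) ↔ v &1 ∈ Nat.rfind _
  refine Iff.trans ?_ Nat.mem_rfind.symm
  simp

end DiophPart

theorem diophPart_of_partrec {f : ℕ →. ℕ} (hf : Nat.Partrec f) : DiophPart f := by
  induction hf with
  | zero => exact .of_diophFn (D.0)
  | succ => exact .of_diophFn (D&0 D+ D.1)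
  | left => exact .of_diophFn (unpair_fst_dioph (D&0))
  | right => exact .of_diophFn (unpair_snd_dioph (D&0))
  | pair _ _ hf hg => exact hf.pair hg
  | comp _ _ hf hg => exact hf.comp hg
  | prec _ _ hf hg => exact hf.prec hg
  | rfind _ hf => exact hf.rfind

/-! ### The halting set is diophantine -/

/-- `S` is the set of parameters `a` for which some integer polynomial `p(a; x₁, …, xₘ)` has a root
in `ℕ`. Mathlib's `Dioph` allows infinitely many unknowns instead of `Fin m`. -/
def IsDiophantine (S : Set ℕ) : Prop :=
  ∃ (m : ℕ) (p : MvPolynomial (Fin (m + 1)) ℤ), ∀ a : ℕ, a ∈ S ↔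
    ∃ x : Fin m → ℕ, MvPolynomial.eval (Fin.cons (a : ℤ) (fun i => (x i : ℤ))) p = 0

theorem isDiophantine_of_dioph {S : Set ℕ} (d : Dioph {v : Unit → ℕ | v () ∈ S}) :
    IsDiophantine S := by
  obtain ⟨m, p, hp⟩ := exists_poly_fin_dummies d
  obtain ⟨P, hP⟩ := exists_mvPolynomial_eval_eq p
  refine ⟨m, P.rename (Sum.elim (fun _ => 0) Fin.succ), fun a => ?_⟩
  refine (hp fun _ => a).trans (exists_congr fun x => ?_)
  rw [← hP, MvPolynomial.eval_rename]
  congr! 3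
  ext (_ | i) <;> rfl

theorem isDiophantine_of_rePred {S : Set ℕ} (re : REPred (· ∈ S)) : IsDiophantine S := by
  have partrec : Nat.Partrec fun a => (Part.assert (a ∈ S) fun _ => Part.some ()).map fun _ => 0 :=
    Partrec.nat_iff.1 (re.map (Computable.const 0).to₂)
  refine isDiophantine_of_dioph
    (((diophPart_of_partrec partrec).mem (proj_dioph ()) (D.0)).ext fun v => ?_)
  simp

open Nat.Partrec (Code) in
theorem exists_rePred_not_computablePred :
    ∃ S : Set ℕ, REPred (· ∈ S) ∧ ¬ ComputablePred (· ∈ S) := by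
  refine ⟨{a | (Code.eval (Denumerable.ofNat Code a) 0).Dom}, ?_, fun h => ?_⟩
  · exact Partrec.dom_re (Code.eval_part.comp (Computable.ofNat Code) (Computable.const 0))
  · refine ComputablePred.halting_problem 0 (ComputablePred.computable_of_manyOneReducible ?_ h)
    exact ⟨Encodable.encode, Computable.encode, fun c => by simp⟩

end HilbertTenth

/-- Unsolvability of Hilbert's tenth problem: there is a diophantine subset of `ℕ`
whose membership predicate is not computable. -/
theorem hilbert_tenth_unsolvable :
    ∃ S : Set ℕ,
      (∃ (m : ℕ) (p : MvPolynomial (Fin (m + 1)) ℤ),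
        ∀ a : ℕ, a ∈ S ↔ ∃ x : Fin m → ℕ,
          MvPolynomial.eval (Fin.cons (a : ℤ) (fun i => (x i : ℤ))) p = 0) ∧
      ¬ ComputablePred (· ∈ S) := by
  obtain ⟨S, re, not_computable⟩ := HilbertTenth.exists_rePred_not_computablePred
  exact ⟨S, HilbertTenth.isDiophantine_of_rePred re, not_computable⟩
end

section
/- (Matiyasevich) There exists a diophantine relation of exponential growth: there are m ∈ ℕ and a polynomial P ∈ ℤ[U, V; X₁,…,X_m] such that, defining J(u,v) for u, v ∈ ℕ by J(u,v) ⇔ ∃x ∈ ℕ^m with P(u, v; x₁,…,x_m) = 0, the relation J satisfies: (i) for all u, v ∈ ℕ, J(u,v) implies v < u^u, and (ii) for every k ∈ ℕ there exist u, v ∈ ℕ with J(u,v) and v > u^k. -/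
/-! Mathlib shows that exponentiation is diophantine, by way of the Pell equation, so the relation
`v < u ^ u` is diophantine; it has exponential growth because `u ^ k < u ^ (k + 1) < u ^ u` for
`u = k + 2`. Mathlib's `Dioph` allows infinitely many auxiliary unknowns, but a polynomial involves
only finitely many of them, and those can be renumbered by some `Fin m`. -/

open MvPolynomial

/-- A relation between natural numbers that is diophantine in the sense of polynomial equations:
the unknowns of the polynomial are `u`, `v` and then the `m` auxiliary ones, in this order, and all
of them range over `ℕ`. -/
def IsDiophantineRel (J : ℕ → ℕ → Prop) : Prop :=
  ∃ (m : ℕ) (P : MvPolynomial (Fin (m + 2)) ℤ), ∀ u v : ℕ,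
    J u v ↔ ∃ x : Fin m → ℕ,
      eval (Fin.cons (u : ℤ) (Fin.cons (v : ℤ) (fun i => (x i : ℤ)))) P = 0

/-- Exponential growth in the sense of Julia Robinson: `v` is bounded by `u ^ u` along the relation,
but by no fixed power of `u`. -/
def HasExponentialGrowth (J : ℕ → ℕ → Prop) : Prop :=
  (∀ u v : ℕ, J u v → v < u ^ u) ∧ ∀ k : ℕ, ∃ u v : ℕ, J u v ∧ u ^ k < v

theorem exists_mvPolynomial_eval_eq_of_isPoly {α : Type*} {f : (α → ℕ) → ℤ} (hf : IsPoly f) :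
    ∃ Q : MvPolynomial α ℤ, ∀ x : α → ℕ, eval (Nat.cast ∘ x) Q = f x := by
  induction hf with
  | proj i => exact ⟨X i, fun x => by simp⟩
  | const n => exact ⟨C n, fun x => by simp⟩
  | sub _ _ ihf ihg =>
    obtain ⟨P, hP⟩ := ihf
    obtain ⟨Q, hQ⟩ := ihg
    exact ⟨P - Q, fun x => by simp [hP, hQ]⟩
  | mul _ _ ihf ihg =>
    obtain ⟨P, hP⟩ := ihf
    obtain ⟨Q, hQ⟩ := ihg
    exact ⟨P * Q, fun x => by simp [hP, hQ]⟩

theorem exists_mvPolynomial_sum_fin_range_eval_eq {R T α β : Type*} [CommSemiring R] [Nonempty T]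
    (φ : T → R) (Q : MvPolynomial (α ⊕ β) R) :
    ∃ (m : ℕ) (P : MvPolynomial (α ⊕ Fin m) R), ∀ a : α → R,
      Set.range (fun x : Fin m → T => eval (Sum.elim a (φ ∘ x)) P) =
        Set.range (fun t : β → T => eval (Sum.elim a (φ ∘ t)) Q) := by
  obtain ⟨m, f, hf, q, rfl⟩ := exists_fin_rename Q
  -- The `i`-th variable of `q` becomes the `i`-th auxiliary unknown unless `f i` is a parameter.
  refine ⟨m, rename (fun i => Sum.map id (fun _ => i) (f i)) q, fun a => ?_⟩
  have eval_eq {x : Fin m → T} {t : β → T} (hxt : ∀ i b, f i = Sum.inr b → x i = t b) :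
      eval (Sum.elim a (φ ∘ x)) (rename (fun i => Sum.map id (fun _ => i) (f i)) q) =
        eval (Sum.elim a (φ ∘ t)) (rename f q) := by
    rw [eval_rename, eval_rename]
    congr 2
    funext i
    cases hi : f i <;> simp [hi, hxt]
  have t₀ : T := Classical.arbitrary T
  apply Set.Subset.antisymm
  · rintro _ ⟨x, rfl⟩
    refine ⟨fun b => Function.extend f x (fun _ => t₀) (Sum.inr b), (eval_eq fun i b hi => ?_).symm⟩
    rw [← hi, hf.extend_apply]
  · rintro _ ⟨t, rfl⟩
    exact ⟨fun i => Sum.elim (fun _ => t₀) t (f i), eval_eq fun i b hi => by simp [hi]⟩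

theorem exists_mvPolynomial_sum_fin_of_dioph {α : Type*} {S : Set (α → ℕ)} (hS : Dioph S) :
    ∃ (m : ℕ) (P : MvPolynomial (α ⊕ Fin m) ℤ), ∀ a : α → ℕ,
      a ∈ S ↔ ∃ x : Fin m → ℕ, eval (Sum.elim (Nat.cast ∘ a) (Nat.cast ∘ x)) P = 0 := by
  obtain ⟨β, p, hp⟩ := hS
  obtain ⟨Q, hQ⟩ := exists_mvPolynomial_eval_eq_of_isPoly p.isPoly
  obtain ⟨m, P, hP⟩ := exists_mvPolynomial_sum_fin_range_eval_eq (Nat.cast : ℕ → ℤ) Q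
  refine ⟨m, P, fun a => ?_⟩
  calc
    a ∈ S ↔ ∃ t : β → ℕ, p (Sum.elim a t) = 0 := hp a
    _ ↔ ∃ t : β → ℕ, eval (Sum.elim (Nat.cast ∘ a) (Nat.cast ∘ t)) Q = 0 := by
      simp only [← Sum.comp_elim, hQ]
    _ ↔ ∃ x : Fin m → ℕ, eval (Sum.elim (Nat.cast ∘ a) (Nat.cast ∘ x)) P = 0 :=
      (Set.ext_iff.mp (hP (Nat.cast ∘ a)) 0).symm

theorem isDiophantineRel_of_dioph {J : ℕ → ℕ → Prop}
    (hJ : Dioph {a : Fin 2 → ℕ | J (a 0) (a 1)}) : IsDiophantineRel J := by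
  obtain ⟨m, P, hP⟩ := exists_mvPolynomial_sum_fin_of_dioph hJ
  refine ⟨m, rename (Sum.elim ![0, 1] fun i => i.succ.succ) P, fun u v => ?_⟩
  refine (hP ![u, v]).trans (exists_congr fun x => ?_)
  rw [eval_rename]
  congr! 3
  funext i
  rcases i with i | i
  · fin_cases i <;> rfl
  · rfl

theorem isDiophantineRel_lt_pow_self : IsDiophantineRel fun u v => v < u ^ u :=
  isDiophantineRel_of_dioph <|
    Dioph.lt_dioph (Dioph.proj_dioph 1) (Dioph.pow_dioph (Dioph.proj_dioph 0) (Dioph.proj_dioph 0))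

theorem hasExponentialGrowth_lt_pow_self : HasExponentialGrowth fun u v => v < u ^ u :=
  ⟨fun _ _ h => h, fun k => ⟨k + 2, (k + 2) ^ (k + 1),
    Nat.pow_lt_pow_right (by lia) (by lia), Nat.pow_lt_pow_right (by lia) (by lia)⟩⟩

/-- Matiyasevich's theorem: there exists a diophantine relation of exponential growth. -/
theorem exists_diophantine_relation_of_exponential_growth :
    ∃ (m : ℕ) (P : MvPolynomial (Fin (m + 2)) ℤ),
      (∀ u v : ℕ,
        (∃ x : Fin m → ℕ,
          MvPolynomial.eval (Fin.cons (u : ℤ) (Fin.cons (v : ℤ) (fun i => (x i : ℤ)))) P = 0) →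
        v < u ^ u) ∧
      (∀ k : ℕ, ∃ u v : ℕ,
        (∃ x : Fin m → ℕ,
          MvPolynomial.eval (Fin.cons (u : ℤ) (Fin.cons (v : ℤ) (fun i => (x i : ℤ)))) P = 0) ∧
        u ^ k < v) := by
  obtain ⟨m, P, hP⟩ := isDiophantineRel_lt_pow_self
  refine ⟨m, P, ?_⟩
  simp only [← hP]
  exact hasExponentialGrowth_lt_pow_self
end
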